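/- Let f be a non-constant meromorphic function on ℂ with hyper-order ρ₁(f) < 1, let c ∈ ℂ \ {0}, and let k be a positive integer. Then m(r, f^{(k)}(z+c)/f(z)) = S(r,f); that is, the proximity function of the quotient f^{(k)}(z+c)/f(z) is o(T(r,f)) as r→∞ outside a possible exceptional set of finite logarithmic measure. -/

import Mathlib

open MeasureTheory Filter Metric

noncomputable section

namespace Nevanlinna

/-- The positive part of the logarithm. -/
def logp (x : ℝ) : ℝ := max (Real.log x) 0

/-- The Nevanlinna proximity function `m(r, f)`. -/
def prox (f : ℂ → ℂ) (r : ℝ) : ℝ :=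
  (2 * Real.pi)⁻¹ * ∫ θ in (0:ℝ)..(2 * Real.pi),
    logp ‖f (r * Complex.exp (θ * Complex.I))‖

/-- The pole order of `f` at `z`: the smallest `n : ℕ` such that
`(· - z) ^ (n + 1) * f` extends analytically across `z` (with value `0`);
it equals `0` when `f` is analytic at `z`, and junk when no such `n` exists. -/
def poleOrd (f : ℂ → ℂ) (z : ℂ) : ℕ :=
  sInf {n : ℕ | AnalyticAt ℂ (fun w => (w - z) ^ (n + 1) * f w) z}

/-- The unintegrated counting function `n(t, f)` of the poles of `f`,
counted with multiplicity. -/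
def poleCount (f : ℂ → ℂ) (t : ℝ) : ℝ :=
  ∑ᶠ z ∈ closedBall (0:ℂ) t, (poleOrd f z : ℝ)

/-- The integrated counting function `N(r, f)` of the poles of `f`. -/
def N (f : ℂ → ℂ) (r : ℝ) : ℝ :=
  (∫ t in (0:ℝ)..r, (poleCount f t - poleCount f 0) / t) +
    poleCount f 0 * Real.log r

/-- The Nevanlinna characteristic `T(r, f)`. -/
def T (f : ℂ → ℂ) (r : ℝ) : ℝ := prox f r + N f r

/-- A quantity `S : ℝ → ℝ` is `S(r, f)`: it is `o(T(r, f))` as `r → ∞`, outside a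
possible exceptional set of finite linear (Lebesgue) measure. -/
def SmallQty (S : ℝ → ℝ) (f : ℂ → ℂ) : Prop :=
  ∃ E : Set ℝ, volume E < ⊤ ∧
    Tendsto (fun r => S r / T f r) (atTop ⊓ 𝓟 Eᶜ) (nhds 0)

/-- A quantity `S : ℝ → ℝ` is `S(r, f)` with an exceptional set of finite
logarithmic measure. -/
def SmallQtyLog (S : ℝ → ℝ) (f : ℂ → ℂ) : Prop :=
  ∃ E : Set ℝ, E ⊆ Set.Ioi 1 ∧ (∫⁻ t in E, ENNReal.ofReal t⁻¹) < ⊤ ∧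
    Tendsto (fun r => S r / T f r) (atTop ⊓ 𝓟 Eᶜ) (nhds 0)

/-- `a` is a small function of `f`: `T(r, a) = S(r, f)`. -/
def SmallFn (a f : ℂ → ℂ) : Prop := SmallQty (T a) f

/-- The hyper-order `ρ₁(f)` of `f` is `< 1`. -/
def HyperOrderLtOne (f : ℂ → ℂ) : Prop :=
  Filter.limsup
    (fun r => ((Real.log (Real.log (T f r)) / Real.log r : ℝ) : EReal)) atTop < 1

/-- `f` and `g` share the (small) function `a` IM (ignoring multiplicities). -/
def ShareIM (f g a : ℂ → ℂ) : Prop := {z | f z = a z} = {z | g z = a z}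

/-- `f` is non-constant. -/
def Nonconst (f : ℂ → ℂ) : Prop := ¬ ∃ w : ℂ, ∀ z, f z = w

/-- The linear differential polynomial in shift
`𝓛_k(f(z+c)) = ∑_{j=0}^{k} b_j(z) f^{(j)}(z + c)`. -/
def L (k : ℕ) (b : ℕ → ℂ → ℂ) (c : ℂ) (f : ℂ → ℂ) : ℂ → ℂ :=
  fun z => ∑ j ∈ Finset.range (k + 1), b j z * iteratedDeriv j f (z + c)

/-- The unintegrated reduced counting function `n̄(t, a; f)` of the `a`-points of
`f` (ignoring multiplicities). -/
def nbarCount (f a : ℂ → ℂ) (t : ℝ) : ℝ :=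
  ((closedBall (0:ℂ) t) ∩ {z | f z = a z}).ncard

/-- The reduced integrated counting function `N̄(r, a; f)` of the `a`-points of
`f` (ignoring multiplicities). -/
def Nbar (f a : ℂ → ℂ) (r : ℝ) : ℝ :=
  (∫ t in (0:ℝ)..r, (nbarCount f a t - nbarCount f a 0) / t) +
    nbarCount f a 0 * Real.log r

/-- The unintegrated reduced counting function of the `a`-points of `f` of
multiplicity at least `2`. -/
def nbar2Count (f a : ℂ → ℂ) (t : ℝ) : ℝ :=
  ((closedBall (0:ℂ) t) ∩
    {z | f z = a z ∧ deriv (fun w => f w - a w) z = 0}).ncard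

/-- The reduced integrated counting function `N̄_{(2}(r, a; f)` of the `a`-points
of `f` of multiplicity at least `2`. -/
def Nbar2 (f a : ℂ → ℂ) (r : ℝ) : ℝ :=
  (∫ t in (0:ℝ)..r, (nbar2Count f a t - nbar2Count f a 0) / t) +
    nbar2Count f a 0 * Real.log r

/-- The sequence `ψ₁, ψ₂, …` : `psiSeq ψ₁ (i - 1)` is `ψ_i`, defined by the
recurrence `ψ_{i+1} = ψ_i' + ψ₁ ψ_i`. -/
def psiSeq (ψ₁ : ℂ → ℂ) : ℕ → ℂ → ℂ
  | 0 => ψ₁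
  | n + 1 => fun z => deriv (psiSeq ψ₁ n) z + ψ₁ z * psiSeq ψ₁ n z

end Nevanlinna

open Nevanlinna

section A1

open MeasureTheory Filter Metric

theorem log_one_add_le_rpow {x α : ℝ} (hx : 0 ≤ x) (h0 : 0 < α) (h1 : α ≤ 1) :
    Real.log (1 + x) ≤ x ^ α / α := by
  have h2 : (1 + x) ^ α ≤ 1 + x ^ α := by
    have := Real.rpow_add_le_add_rpow (p := α) zero_le_one hx h0.le h1
    simpa using this
  have h3 : α * Real.log (1 + x) ≤ x ^ α := by
    rw [← Real.log_rpow (by positivity)]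
    have h4 : 0 < (1 + x) ^ α := by positivity
    have := Real.log_le_sub_one_of_pos h4
    linarith
  rw [le_div_iff₀ h0]; linarith

theorem log_norm_sub_le {z w b : ℂ} {d α : ℝ} (hz : z ≠ b) (hw : w ≠ b) (hd : ‖w - z‖ ≤ d)
    (h0 : 0 < α) (h1 : α ≤ 1) :
    Real.log ‖w - b‖ - Real.log ‖z - b‖ ≤ d ^ α / α * ‖z - b‖ ^ (-α) := by
  have hz' : 0 < ‖z - b‖ := norm_pos_iff.2 (sub_ne_zero.2 hz)
  have hw' : 0 < ‖w - b‖ := norm_pos_iff.2 (sub_ne_zero.2 hw)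
  have hd0 : 0 ≤ d := (norm_nonneg _).trans hd
  have h2 : ‖w - b‖ ≤ ‖z - b‖ * (1 + d / ‖z - b‖) := by
    have : ‖w - b‖ ≤ ‖w - z‖ + ‖z - b‖ := by simpa using norm_add_le (w - z) (z - b)
    field_simp
    linarith
  have h3 := Real.log_le_log hw' h2
  rw [Real.log_mul hz'.ne' (by positivity)] at h3
  have h4 := log_one_add_le_rpow (x := d / ‖z - b‖) (by positivity) h0 h1
  rw [Real.div_rpow hd0 hz'.le] at h4
  rw [Real.rpow_neg hz'.le]
  calc _ ≤ _ := by linarith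
    _ ≤ _ := h4
    _ = _ := by ring

theorem abs_log_norm_sub_le {z w b : ℂ} {d α : ℝ} (hz : z ≠ b) (hw : w ≠ b) (hd : ‖w - z‖ ≤ d)
    (h0 : 0 < α) (h1 : α ≤ 1) :
    |Real.log ‖w - b‖ - Real.log ‖z - b‖| ≤ d ^ α / α * (‖z - b‖ ^ (-α) + ‖w - b‖ ^ (-α)) := by
  have hd0 : 0 ≤ d := (norm_nonneg _).trans hd
  have h2 := log_norm_sub_le hz hw hd h0 h1
  have h3 := log_norm_sub_le (d := d) hw hz ((norm_sub_rev z w).trans_le hd) h0 h1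
  have h4 : 0 ≤ d ^ α / α * ‖z - b‖ ^ (-α) := by positivity
  have h5 : 0 ≤ d ^ α / α * ‖w - b‖ ^ (-α) := by positivity
  rw [abs_le, mul_add]; constructor <;> linarith

/-- `|sin|^{-α}` is integrable. -/
theorem sin_rpow_intervalIntegrable {α : ℝ} (h0 : 0 < α) (h1 : α < 1) (a b : ℝ) :
    IntervalIntegrable (fun θ => |Real.sin θ| ^ (-α)) volume a b := by
  have hper : Function.Periodic (fun θ => |Real.sin θ| ^ (-α)) Real.pi := by
    intro θ; simp [Real.sin_add_pi]
  have hm : Measurable (fun θ => |Real.sin θ| ^ (-α)) := by fun_prop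
  have hbase : IntervalIntegrable (fun θ => |Real.sin θ| ^ (-α)) volume 0 (Real.pi / 2) := by
    have hi : IntervalIntegrable (fun θ : ℝ => (2 / Real.pi) ^ (-α) * θ ^ (-α)) volume 0 (Real.pi / 2) :=
      (intervalIntegral.intervalIntegrable_rpow' (by linarith)).const_mul _
    refine hi.mono_fun' hm.aestronglyMeasurable ?_
    rw [Set.uIoc_of_le (by positivity)]
    refine (ae_restrict_iff' measurableSet_Ioc).2 (Eventually.of_forall fun θ hθ => ?_)
    have h3 := Real.mul_le_sin hθ.1.le hθ.2
    have h4 : 0 < 2 / Real.pi * θ := by have := hθ.1; positivity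
    show ‖|Real.sin θ| ^ (-α)‖ ≤ (2 / Real.pi) ^ (-α) * θ ^ (-α)
    rw [Real.norm_of_nonneg (by positivity), ← Real.mul_rpow (by positivity) hθ.1.le,
      abs_of_pos (by linarith)]
    exact Real.rpow_le_rpow_of_nonpos h4 h3 (by linarith)
  have hbase2 : IntervalIntegrable (fun θ => |Real.sin θ| ^ (-α)) volume (-(Real.pi / 2)) 0 := by
    have := ((IntervalIntegrable.iff_comp_neg).1 hbase).symm
    simpa using this
  have h3 : IntervalIntegrable (fun θ => |Real.sin θ| ^ (-α)) volume (-(Real.pi / 2)) (-(Real.pi / 2) + Real.pi) := by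
    have := hbase2.trans hbase
    convert this using 1; ring
  exact hper.intervalIntegrable Real.pi_ne_zero h3 a b

theorem norm_circleMap_sub_ge (r : ℝ) (hr : 0 < r) (b : ℂ) (θ : ℝ) :
    r * |Real.sin (θ - b.arg)| ≤ ‖circleMap 0 r θ - b‖ := by
  have h1 : circleMap 0 r θ - b =
      Complex.exp (b.arg * Complex.I) * (r * Complex.exp ((θ - b.arg : ℝ) * Complex.I) - ‖b‖) := by
    rw [mul_sub, mul_left_comm, ← Complex.exp_add, mul_comm _ (‖b‖ : ℂ), Complex.norm_mul_exp_arg_mul_I]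
    simp only [circleMap, zero_add]
    congr 3
    push_cast; ring
  rw [h1, norm_mul, Complex.norm_exp_ofReal_mul_I, one_mul]
  refine le_trans (le_of_eq ?_) (Complex.abs_im_le_norm _)
  rw [Complex.sub_im, Complex.im_ofReal_mul, Complex.exp_ofReal_mul_I_im, Complex.ofReal_im, sub_zero, abs_mul,
    abs_of_pos hr]

theorem circle_rpow {α : ℝ} (h0 : 0 < α) (h1 : α < 1) :
    ∃ K : ℝ, 0 ≤ K ∧ ∀ (r : ℝ) (_ : 0 < r) (b : ℂ),
      CircleIntegrable (fun z => ‖z - b‖ ^ (-α)) 0 r ∧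
      Real.circleAverage (fun z => ‖z - b‖ ^ (-α)) 0 r ≤ K * r ^ (-α) := by
  have hint := sin_rpow_intervalIntegrable h0 h1
  refine ⟨(2 * Real.pi)⁻¹ * ∫ θ in (0:ℝ)..(2 * Real.pi), |Real.sin θ| ^ (-α), ?_, ?_⟩
  · apply mul_nonneg (by positivity)
    apply intervalIntegral.integral_nonneg (by positivity)
    intros; positivity
  intro r hr b
  have hi2 : IntervalIntegrable (fun θ => r ^ (-α) * |Real.sin (θ - b.arg)| ^ (-α)) volume 0 (2 * Real.pi) := by
    apply IntervalIntegrable.const_mul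
    have := (hint (0 - b.arg) (2 * Real.pi - b.arg)).comp_sub_right b.arg
    simpa using this
  have hae : ∀ᵐ θ : ℝ, ‖circleMap 0 r θ - b‖ ^ (-α) ≤ r ^ (-α) * |Real.sin (θ - b.arg)| ^ (-α) := by
    have hc : ({θ : ℝ | Real.sin (θ - b.arg) = 0}).Countable := by
      have : {θ : ℝ | Real.sin (θ - b.arg) = 0} ⊆ Set.range (fun n : ℤ => n * Real.pi + b.arg) := by
        intro θ hθ
        obtain ⟨n, hn⟩ := Real.sin_eq_zero_iff.1 hθ
        exact ⟨n, by simp only [hn]; ring⟩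
      exact (Set.countable_range _).mono this
    filter_upwards [hc.ae_notMem volume] with θ hθ
    have hs : 0 < |Real.sin (θ - b.arg)| := abs_pos.2 hθ
    rw [← Real.mul_rpow hr.le hs.le]
    exact Real.rpow_le_rpow_of_nonpos (by positivity) (norm_circleMap_sub_ge r hr b θ) (by linarith)
  have hci : CircleIntegrable (fun z => ‖z - b‖ ^ (-α)) 0 r := by
    unfold CircleIntegrable
    refine hi2.mono_fun' ?_ ?_
    · have : Measurable (fun θ => ‖circleMap 0 r θ - b‖ ^ (-α)) := by
        have := (continuous_circleMap 0 r).measurable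
        fun_prop
      exact this.aestronglyMeasurable
    · refine ae_restrict_of_ae ?_
      filter_upwards [hae] with θ hθ
      rwa [Real.norm_of_nonneg (by positivity)]
  refine ⟨hci, ?_⟩
  rw [Real.circleAverage_def, smul_eq_mul, mul_assoc]
  apply mul_le_mul_of_nonneg_left _ (by positivity)
  calc _ ≤ ∫ θ in (0:ℝ)..(2 * Real.pi), r ^ (-α) * |Real.sin (θ - b.arg)| ^ (-α) :=
        intervalIntegral.integral_mono_ae (by positivity) hci hi2 hae
    _ = r ^ (-α) * ∫ θ in (0:ℝ)..(2 * Real.pi), |Real.sin θ| ^ (-α) := by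
        rw [intervalIntegral.integral_const_mul]
        congr 1
        rw [intervalIntegral.integral_comp_sub_right (fun θ => |Real.sin θ| ^ (-α))]
        have hper : Function.Periodic (fun θ => |Real.sin θ| ^ (-α)) (2 * Real.pi) := by
          intro θ; simp [Real.sin_add_two_pi]
        have := hper.intervalIntegral_add_eq (0 - b.arg) 0
        rw [zero_add] at this
        rw [← this]; congr 1; ring
    _ = _ := by ring

end A1

section B1

open MeasureTheory Filter Metric

theorem growth_block {g : ℝ → ℝ} (hg : Monotone g) (h0 : ∀ x, 0 ≤ g x) {A B s : ℝ} (hAB : A ≤ B)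
    (hs : 0 ≤ s) :
    volume {r ∈ Set.Ico A B | g r + 1 < g (r + s)} ≤ ENNReal.ofReal (s * g (B + s)) := by
  have hi : ∀ a b, IntervalIntegrable g volume a b := fun a b => hg.intervalIntegrable
  have hgs : Monotone (fun r => g (r + s)) := fun x y h => hg (by linarith)
  have hi2 : ∀ a b, IntervalIntegrable (fun r => g (r + s)) volume a b := fun a b => hgs.intervalIntegrable
  have h1 : ∫ r in A..B, (g (r + s) - g r) ≤ s * g (B + s) := by
    rw [intervalIntegral.integral_sub (hi2 _ _) (hi _ _), intervalIntegral.integral_comp_add_right]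
    have e1 := intervalIntegral.integral_add_adjacent_intervals (hi A (A+s)) (hi (A+s) (B+s))
    have e2 := intervalIntegral.integral_add_adjacent_intervals (hi A B) (hi B (B+s))
    have e3 : 0 ≤ ∫ r in A..(A+s), g r := intervalIntegral.integral_nonneg (by linarith) (fun x _ => h0 x)
    have e4 : ∫ r in B..(B+s), g r ≤ ∫ r in B..(B+s), g (B+s) :=
      intervalIntegral.integral_mono_on (by linarith) (hi _ _) (by simp) (fun x hx => hg hx.2)
    rw [intervalIntegral.integral_const] at e4
    simp only [smul_eq_mul, add_sub_cancel_left] at e4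
    linarith
  have hm : Measurable (fun r => g (r + s) - g r) := hgs.measurable.sub hg.measurable
  have hnn : ∀ r, 0 ≤ g (r + s) - g r := fun r => sub_nonneg.2 (hg (by linarith))
  calc volume {r ∈ Set.Ico A B | g r + 1 < g (r + s)}
      = volume ({r | g r + 1 < g (r + s)} ∩ Set.Ico A B) := by
        congr 1; ext; simp [and_comm]
    _ = (volume.restrict (Set.Ico A B)) {r | g r + 1 < g (r + s)} := by
        rw [Measure.restrict_apply]
        exact measurableSet_lt (hg.measurable.add_const _) hgs.measurable
    _ ≤ (volume.restrict (Set.Ico A B)) {r | 1 ≤ ENNReal.ofReal (g (r + s) - g r)} := by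
        apply measure_mono
        intro r hr
        simp only [Set.mem_ofPred_eq] at *
        rw [ENNReal.one_le_ofReal]; linarith
    _ ≤ ∫⁻ r in Set.Ico A B, ENNReal.ofReal (g (r + s) - g r) := by
        have := mul_meas_ge_le_lintegral (μ := volume.restrict (Set.Ico A B)) hm.ennreal_ofReal 1
        simpa using this
    _ = ENNReal.ofReal (∫ r in Set.Ico A B, (g (r + s) - g r)) := by
        rw [ofReal_integral_eq_lintegral_ofReal]
        · exact (intervalIntegrable_iff_integrableOn_Ico_of_le hAB).1 ((hi2 _ _).sub (hi _ _))
        · exact Eventually.of_forall hnn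
    _ ≤ _ := by
        apply ENNReal.ofReal_le_ofReal
        rw [integral_Ico_eq_integral_Ioc, ← intervalIntegral.integral_of_le hAB]
        exact h1

theorem growth {g : ℝ → ℝ} (hg : Monotone g) (h0 : ∀ x, 0 ≤ g x) {σ δ : ℝ} (hσ : 0 ≤ σ)
    (hδ : 0 ≤ δ) (hσδ : σ + δ < 1) (hgr : ∀ᶠ r in atTop, g r ≤ r ^ σ) :
    ∃ E : Set ℝ, E ⊆ Set.Ioi 1 ∧ (∫⁻ t in E, ENNReal.ofReal t⁻¹) < ⊤ ∧
      ∀ᶠ r in atTop ⊓ 𝓟 Eᶜ, g (r + r ^ δ) ≤ g r + 1 := by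
  obtain ⟨r0, hr0⟩ := eventually_atTop.1 hgr
  obtain ⟨n0, hn0⟩ := pow_unbounded_of_one_lt r0 (one_lt_two)
  let A : ℕ → ℝ := fun n => 2 ^ (n + n0 + 1)
  have hA0 : ∀ n, 0 < A n := fun n => by positivity
  have hA1 : ∀ n, 1 < A n := fun n => one_lt_pow₀ (by norm_num) (by omega)
  have hAs : ∀ n, A (n + 1) = 2 * A n := fun n => by simp only [A]; ring
  let s : ℕ → ℝ := fun n => (A (n + 1)) ^ δ
  have hs0 : ∀ n, 0 ≤ s n := fun n => by have := hA0 (n+1); positivity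
  let En : ℕ → Set ℝ := fun n => {r ∈ Set.Ico (A n) (A (n+1)) | g r + 1 < g (r + s n)}
  have hEm : ∀ n, MeasurableSet (En n) := fun n => by
    refine measurableSet_Ico.inter (measurableSet_lt (hg.measurable.add_const _) ?_)
    exact (hg.measurable.comp (measurable_id.add_const _))
  have hvol : ∀ n, volume (En n) ≤ ENNReal.ofReal (s n * (A (n + 2)) ^ σ) := by
    intro n
    refine (growth_block hg h0 (by rw [hAs]; linarith [hA0 n]) (hs0 n)).trans ?_
    apply ENNReal.ofReal_le_ofReal
    apply mul_le_mul_of_nonneg_left _ (hs0 n)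
    have h1 : s n ≤ A (n + 1) := by
      have := Real.rpow_le_rpow_of_exponent_le (hA1 (n+1)).le (show δ ≤ 1 by linarith)
      simpa using this
    have h2 : A (n + 1) + s n ≤ A (n + 2) := by rw [hAs (n+1)]; linarith
    refine (hg h2).trans (hr0 _ ?_)
    refine hn0.le.trans ?_
    exact pow_le_pow_right₀ (by norm_num) (by omega)
  have hlog : ∀ n, (∫⁻ t in En n, ENNReal.ofReal t⁻¹) ≤ ENNReal.ofReal ((A n)⁻¹ * (s n * (A (n + 2)) ^ σ)) := by
    intro n
    calc (∫⁻ t in En n, ENNReal.ofReal t⁻¹) ≤ ∫⁻ t in En n, ENNReal.ofReal (A n)⁻¹ := by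
          apply setLIntegral_mono measurable_const
          intro t ht
          apply ENNReal.ofReal_le_ofReal
          have := ht.1.1
          have := hA0 n
          gcongr
      _ = ENNReal.ofReal (A n)⁻¹ * volume (En n) := by rw [setLIntegral_const]
      _ ≤ ENNReal.ofReal (A n)⁻¹ * ENNReal.ofReal (s n * (A (n + 2)) ^ σ) := by gcongr; exact hvol n
      _ = _ := (ENNReal.ofReal_mul (inv_nonneg.2 (hA0 n).le)).symm
  refine ⟨⋃ n, En n, ?_, ?_, ?_⟩
  · intro r hr
    obtain ⟨n, hn⟩ := Set.mem_iUnion.1 hr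
    exact (hA1 n).trans_le hn.1.1
  · refine (lintegral_iUnion_le _ _).trans_lt ?_
    refine (ENNReal.tsum_le_tsum hlog).trans_lt ?_
    have hterm : ∀ n, (A n)⁻¹ * (s n * (A (n + 2)) ^ σ) = (2 ^ δ * 4 ^ σ * (2 ^ (n0+1):ℝ) ^ (δ + σ - 1)) * ((2:ℝ) ^ (δ + σ - 1)) ^ n := by
      intro n
      have e1 : A (n+2) = 4 * A n := by rw [hAs, hAs]; ring
      have e2 : A n = 2 ^ (n0+1) * 2 ^ n := by simp only [A]; ring
      simp only [s]
      rw [e1, hAs, Real.mul_rpow (by norm_num) (hA0 n).le, Real.mul_rpow (by norm_num) (hA0 n).le]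
      have e3 : (A n) ^ (δ + σ - 1) = (A n)⁻¹ * (A n) ^ δ * (A n) ^ σ := by
        rw [Real.rpow_sub (hA0 n), Real.rpow_add (hA0 n), Real.rpow_one]
        have := hA0 n
        field_simp
      have e4 : (A n) ^ (δ + σ - 1) = (2 ^ (n0+1):ℝ) ^ (δ + σ - 1) * ((2:ℝ) ^ (δ + σ - 1)) ^ n := by
        rw [e2, Real.mul_rpow (by positivity) (by positivity)]
        congr 1
        rw [← Real.rpow_natCast, ← Real.rpow_natCast, ← Real.rpow_mul (by norm_num), ← Real.rpow_mul (by norm_num), mul_comm]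
      calc _ = 2 ^ δ * 4 ^ σ * ((A n)⁻¹ * (A n) ^ δ * (A n) ^ σ) := by ring
        _ = _ := by rw [← e3, e4]; ring
    have hsum : Summable (fun n => (A n)⁻¹ * (s n * (A (n + 2)) ^ σ)) := by
      simp_rw [hterm]
      apply Summable.mul_left
      apply summable_geometric_of_lt_one (by positivity)
      exact Real.rpow_lt_one_of_one_lt_of_neg (by norm_num) (by linarith)
    exact hsum.tsum_ofReal_lt_top
  · rw [eventually_inf_principal]
    filter_upwards [eventually_ge_atTop (A 0)] with r hr hrE
    by_contra hcon
    push Not at hcon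
    apply hrE
    have hr1 : 1 ≤ r := (hA1 0).le.trans hr
    -- find n
    have hex : ∃ n, r < A (n + 1) := by
      obtain ⟨m, hm⟩ := pow_unbounded_of_one_lt r (one_lt_two)
      exact ⟨m, hm.trans_le (pow_le_pow_right₀ (by norm_num) (by omega))⟩
    classical
    let n := Nat.find hex
    have hn : r < A (n + 1) := Nat.find_spec hex
    have hn' : A n ≤ r := by
      rcases Nat.eq_zero_or_pos n with h | h
      · rw [h]; exact hr
      · have := Nat.find_min hex (m := n - 1) (by omega)
        push Not at this
        rwa [Nat.sub_add_cancel h] at this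
    refine Set.mem_iUnion.2 ⟨n, ⟨hn', hn⟩, ?_⟩
    refine hcon.trans_le (hg ?_)
    have : r ^ δ ≤ s n := Real.rpow_le_rpow (by linarith) hn.le hδ
    linarith

end B1

section C1

open MeasureTheory Filter Metric Complex

theorem nf_order_zero {f : ℂ → ℂ} (hNF : MeromorphicNFOn f Set.univ) {w : ℂ} (h : meromorphicOrderAt f w = 0) :
    AnalyticAt ℂ f w ∧ f w ≠ 0 := by
  have h1 : MeromorphicNFAt f w := hNF (Set.mem_univ w)
  exact ⟨h1.meromorphicOrderAt_nonneg_iff_analyticAt.1 (le_of_eq h.symm), h1.meromorphicOrderAt_eq_zero_iff.1 h⟩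

theorem poisson_jensen {f : ℂ → ℂ} (hNF : MeromorphicNFOn f Set.univ)
    (ho : ∀ z, meromorphicOrderAt f z ≠ ⊤) {R : ℝ} (hR : 0 < R)
    (hS : ∀ z ∈ sphere (0:ℂ) R, meromorphicOrderAt f z = 0) :
    ∃ A : Finset ℂ, (∀ a, a ∈ A ↔ a ∈ ball (0:ℂ) R ∧ meromorphicOrderAt f a ≠ 0) ∧
      ∀ w ∈ ball (0:ℂ) R, w ∉ A →
        Real.log ‖f w‖ = Real.circleAverage (fun ζ => poissonKernel 0 w ζ * Real.log ‖f ζ‖) 0 R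
          - ∑ a ∈ A, ((meromorphicOrderAt f a).untop₀ : ℝ) * Real.log ‖canonicalFactor R a w‖ := by
  have hM : ∀ U, MeromorphicOn f U := fun U z _ => (hNF (Set.mem_univ z)).meromorphicAt
  obtain ⟨h, Dc⟩ := (hM (closedBall 0 R)).exists_ecanonicalDecomp (fun u => ho u)
  have hfin := (hM (closedBall 0 R)).divisor_ball_support_finite
  have hdiv : ∀ a ∈ ball (0:ℂ) R, MeromorphicOn.divisor f (ball 0 R) a = (meromorphicOrderAt f a).untop₀ :=
    fun a ha => MeromorphicOn.divisor_apply (hM _) ha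
  have hA : ∀ a, a ∈ hfin.toFinset ↔ a ∈ ball (0:ℂ) R ∧ meromorphicOrderAt f a ≠ 0 := by
    intro a
    rw [Set.Finite.mem_toFinset, Function.mem_support]
    by_cases ha : a ∈ ball (0:ℂ) R
    · rw [hdiv a ha]
      simp [ha, ho a]
    · simp [ha]
  have hsph : ∀ a, MeromorphicOn.divisor f (sphere 0 R) a = 0 := by
    intro a
    by_cases ha : a ∈ sphere (0:ℂ) R
    · rw [MeromorphicOn.divisor_apply (hM _) ha, hS a ha]; rfl
    · exact Function.locallyFinsuppWithin.apply_eq_zero_of_notMem _ ha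
  have key : ∀ w ∈ closedBall (0:ℂ) R, meromorphicOrderAt f w = 0 →
      Real.log ‖h w‖ = ∑ a ∈ hfin.toFinset, ((meromorphicOrderAt f a).untop₀ : ℝ) * Real.log ‖canonicalFactor R a w‖ + Real.log ‖f w‖ := by
    intro w hw hw0
    rw [Dc.log_norm_eq hw hw0 hR]
    have h1 := nf_order_zero hNF hw0
    rw [h1.1.meromorphicTrailingCoeffAt_of_ne_zero h1.2]
    simp only [hsph, Int.cast_zero, zero_mul, finsum_zero, sub_zero]
    congr 1
    rw [finsum_eq_sum_of_support_subset (s := hfin.toFinset)]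
    · apply Finset.sum_congr rfl
      intro a ha
      rw [hdiv a ((hA a).1 ha).1]
    · intro a ha
      simp only [Function.mem_support, ne_eq, mul_eq_zero, not_or] at ha
      simp only [Set.Finite.coe_toFinset, Function.mem_support]
      exact_mod_cast ha.1
  refine ⟨hfin.toFinset, hA, ?_⟩
  intro w hw hwA
  have hw0 : meromorphicOrderAt f w = 0 := by
    by_contra hcon
    exact hwA ((hA w).2 ⟨hw, hcon⟩)
  have h1 := key w (ball_subset_closedBall hw) hw0
  have h2 : Real.circleAverage (poissonKernel 0 w • (fun z => Real.log ‖h z‖)) 0 R = Real.log ‖h w‖ :=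
    InnerProductSpace.HarmonicOnNhd.circleAverage_poissonKernel_smul
      (fun x hx ↦ (Dc.analyticOnNhd x hx).harmonicAt_log_norm (Dc.ne_zero x hx)) hw
  have h3 : Real.circleAverage (poissonKernel 0 w • (fun z => Real.log ‖h z‖)) 0 R
     = Real.circleAverage (fun ζ => poissonKernel 0 w ζ * Real.log ‖f ζ‖) 0 R := by
    apply Real.circleAverage_congr_sphere
    intro ζ hζ
    rw [abs_of_pos hR] at hζ
    simp only [Pi.smul_apply', smul_eq_mul]
    rw [key ζ (sphere_subset_closedBall hζ) (hS ζ hζ)]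
    rw [Finset.sum_eq_zero]
    · simp
    · intro a ha
      rw [norm_canonicalFactor_eval_circle_eq_one ((hA a).1 ha).1 hζ]; simp
  rw [← h3, h2, h1]; ring

-- mean value of the Poisson integral
theorem poisson_mean {g : ℂ → ℝ} {R r : ℝ} (hg : CircleIntegrable g 0 R) (hr : 0 < r) (hrR : r < R) :
    Real.circleAverage (fun z => Real.circleAverage (fun ζ => poissonKernel 0 z ζ * g ζ) 0 R) 0 r = Real.circleAverage g 0 R
    ∧ CircleIntegrable (fun z => Real.circleAverage (fun ζ => poissonKernel 0 z ζ * g ζ) 0 R) 0 r := by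
  have h₁ : CircleIntegrable (fun ζ ↦ (g ζ : ℂ)) 0 R := by
    simp only [CircleIntegrable, intervalIntegrable_iff] at hg ⊢
    exact Complex.ofRealCLM.integrable_comp hg
  have han := analyticOnNhd_circleAverage_herglotzRieszKernel_smul h₁
  set H : ℂ → ℂ := (fun w ↦ Real.circleAverage (fun ζ ↦ herglotzRieszKernel 0 w ζ • (g ζ : ℂ)) 0 R) with hH
  have hre : ∀ z ∈ ball (0:ℂ) R, Real.circleAverage (fun ζ => poissonKernel 0 z ζ * g ζ) 0 R = (H z).re := by
    intro z hz
    rw [hH, re_circleAverage_herglotzRieszKernel_smul hg hz, ← poissonKernel_eq_re_herglotzRieszKernel]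
    rfl
  have hsub : closedBall (0:ℂ) |r| ⊆ ball 0 R := by
    rw [abs_of_pos hr]; exact closedBall_subset_ball hrR
  have hharm : InnerProductSpace.HarmonicOnNhd (fun z => (H z).re) (closedBall (0:ℂ) |r|) :=
    fun z hz => (han z (hsub hz)).harmonicAt_re
  constructor
  · rw [Real.circleAverage_congr_sphere (f₂ := fun z => (H z).re)]
    · rw [hharm.circleAverage_eq, ← hre 0 (by simp; linarith)]
      apply Real.circleAverage_congr_sphere
      intro ζ hζ
      have : ‖ζ‖ ≠ 0 := by
        simp at hζ; rw [hζ]; simp; linarith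
      simp [poissonKernel_def, this]
    · intro z hz
      exact hre z (hsub (sphere_subset_closedBall hz))
  · have : CircleIntegrable (fun z => (H z).re) 0 r := by
      apply ContinuousOn.circleIntegrable hr.le
      intro z hz
      have hz' : z ∈ ball (0:ℂ) R := hsub (by rw [abs_of_pos hr]; exact sphere_subset_closedBall hz)
      exact (Complex.continuous_re.continuousAt.comp (han z hz').continuousAt).continuousWithinAt
    refine (circleIntegrable_congr ?_).2 this
    intro z hz
    exact hre z (hsub (sphere_subset_closedBall hz))

end C1

section C2

open MeasureTheory Filter Metric Complex

theorem poisson_diff {z w ζ : ℂ} {R d : ℝ} (hz : ‖z‖ < R) (hζ : ‖ζ‖ = R) (hwz : ‖w - z‖ ≤ d)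
    (hd : 2 * d ≤ R - ‖z‖) :
    |poissonKernel 0 w ζ - poissonKernel 0 z ζ| ≤ 4 * d / (R - ‖z‖) * poissonKernel 0 z ζ := by
  have hd0 : 0 ≤ d := (norm_nonneg _).trans hwz
  have hR : 0 < R := (norm_nonneg _).trans_lt hz
  have h1 : R - ‖z‖ ≤ ‖ζ - z‖ := by rw [← hζ]; exact norm_sub_norm_le _ _
  have h2 : ‖ζ - z‖ / 2 ≤ ‖ζ - w‖ := by
    have : ‖ζ - z‖ ≤ ‖ζ - w‖ + ‖w - z‖ := norm_sub_le_norm_sub_add_norm_sub _ _ _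
    linarith
  have h3 : 0 < ‖ζ - z‖ := by linarith
  have h4 : 0 < ‖ζ - w‖ := by linarith
  have hz0 : ζ - z ≠ 0 := norm_pos_iff.1 h3
  have hw0 : ζ - w ≠ 0 := norm_pos_iff.1 h4
  have e : herglotzRieszKernel 0 w ζ - herglotzRieszKernel 0 z ζ = 2 * ζ * (w - z) / ((ζ - w) * (ζ - z)) := by
    simp only [herglotzRieszKernel_def, sub_zero]
    field_simp
    ring
  calc |poissonKernel 0 w ζ - poissonKernel 0 z ζ| = |(herglotzRieszKernel 0 w ζ - herglotzRieszKernel 0 z ζ).re| := by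
        simp [poissonKernel_eq_re_herglotzRieszKernel]
    _ ≤ ‖herglotzRieszKernel 0 w ζ - herglotzRieszKernel 0 z ζ‖ := Complex.abs_re_le_norm _
    _ = 2 * R * ‖w - z‖ / (‖ζ - w‖ * ‖ζ - z‖) := by rw [e]; simp [hζ]
    _ ≤ 2 * R * d / (‖ζ - z‖ / 2 * ‖ζ - z‖) := by gcongr
    _ = 4 * R * d / ‖ζ - z‖ ^ 2 := by field_simp; ring
    _ ≤ _ := by
        simp only [poissonKernel_def, sub_zero, hζ]
        have h5 : 0 < R - ‖z‖ := by linarith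
        rw [div_mul_div_comm]
        rw [div_le_div_iff₀ (by positivity) (by positivity)]
        have : 0 ≤ d * ‖z‖ := by positivity
        have h6 : 4 * R * d * (R - ‖z‖) ≤ 4 * d * (R ^ 2 - ‖z‖ ^ 2) := by nlinarith [norm_nonneg z]
        have := mul_le_mul_of_nonneg_right h6 (sq_nonneg ‖ζ - z‖)
        nlinarith

theorem poisson_cont {z : ℂ} {R : ℝ} (hz : ‖z‖ < R) : ContinuousOn (fun ζ => poissonKernel 0 z ζ) (sphere (0:ℂ) R) := by
  simp only [poissonKernel_def, sub_zero]
  apply ContinuousOn.div (by fun_prop) (by fun_prop)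
  intro ζ hζ
  have : ζ ≠ z := by rintro rfl; simp at hζ; linarith
  have := norm_pos_iff.2 (sub_ne_zero.2 this)
  positivity

theorem poisson_int_diff {z w : ℂ} {R d : ℝ} {u : ℂ → ℝ} (hu : ContinuousOn u (sphere (0:ℂ) R)) (hz : ‖z‖ < R) (hw : ‖w‖ < R)
    (hwz : ‖w - z‖ ≤ d) (hd : 2 * d ≤ R - ‖z‖) :
    |Real.circleAverage (fun ζ => poissonKernel 0 w ζ * u ζ) 0 R - Real.circleAverage (fun ζ => poissonKernel 0 z ζ * u ζ) 0 R|
     ≤ 4 * d / (R - ‖z‖) * Real.circleAverage (fun ζ => poissonKernel 0 z ζ * |u ζ|) 0 R := by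
  have hR : 0 < R := (norm_nonneg _).trans_lt hz
  have cz : ContinuousOn (fun ζ => poissonKernel 0 z ζ * u ζ) (sphere (0:ℂ) R) := (poisson_cont hz).mul hu
  have cw : ContinuousOn (fun ζ => poissonKernel 0 w ζ * u ζ) (sphere (0:ℂ) R) := (poisson_cont hw).mul hu
  rw [← Real.circleAverage_sub (cw.circleIntegrable hR.le) (cz.circleIntegrable hR.le)]
  refine Real.abs_circleAverage_le_circleAverage_abs.trans ?_
  rw [← smul_eq_mul, ← Real.circleAverage_fun_smul]
  apply Real.circleAverage_mono
  · exact (cw.sub cz).abs.circleIntegrable hR.le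
  · exact (((poisson_cont hz).mul hu.abs).const_smul (4 * d / (R - ‖z‖))).circleIntegrable hR.le
  · intro ζ hζ
    rw [abs_of_pos hR] at hζ
    have hζ' : ‖ζ‖ = R := by simpa using hζ
    have := mul_le_mul_of_nonneg_right (poisson_diff hz hζ' hwz hd) (abs_nonneg (u ζ))
    simp only [Pi.abs_apply, Pi.sub_apply, smul_eq_mul, ← sub_mul, abs_mul]
    rw [← mul_assoc]; exact this

theorem canonical_diff {z w a : ℂ} {R d α : ℝ} (hza : z ≠ a) (hwa : w ≠ a) (hz : ‖z‖ < R) (hw : ‖w‖ < R) (ha : ‖a‖ < R)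
    (hwz : ‖w - z‖ ≤ d) (h0 : 0 < α) (h1 : α ≤ 1) :
    |Real.log ‖canonicalFactor R a w‖ - Real.log ‖canonicalFactor R a z‖| ≤
      d ^ α / α * ((‖z - a‖ ^ (-α) + ‖w - a‖ ^ (-α)) +
        (‖z - R ^ 2 / (starRingEnd ℂ) a‖ ^ (-α) + ‖w - R ^ 2 / (starRingEnd ℂ) a‖ ^ (-α))) := by
  have hR : 0 < R := (norm_nonneg _).trans_lt hz
  have hd0 : 0 ≤ d := (norm_nonneg _).trans hwz
  have hRc : (R:ℂ) ≠ 0 := by exact_mod_cast hR.ne'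
  have main := abs_log_norm_sub_le hza hwa hwz h0 h1
  by_cases ha0 : a = 0
  · subst ha0
    have e : ∀ x : ℂ, x ≠ 0 → Real.log ‖canonicalFactor R 0 x‖ = Real.log R - Real.log ‖x - 0‖ := by
      intro x hx
      rw [canonicalFactor_apply, ← Real.log_div hR.ne' (by simpa using hx)]
      congr 1
      simp [abs_of_pos hR]; field_simp
    rw [e w hwa, e z hza]
    simp only [map_zero, div_zero]
    have h5 : 0 ≤ d ^ α / α * (‖z - 0‖ ^ (-α) + ‖w - 0‖ ^ (-α)) := by positivity
    calc _ = |Real.log ‖w - 0‖ - Real.log ‖z - 0‖| := by rw [← abs_neg]; congr 1; ring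
      _ ≤ _ := by rw [mul_add]; linarith
  · have hac : (starRingEnd ℂ) a ≠ 0 := by simpa using ha0
    set b : ℂ := R ^ 2 / (starRingEnd ℂ) a with hb
    have hbn : R < ‖b‖ := by
      rw [hb]; simp only [norm_div, norm_pow, norm_real, Real.norm_eq_abs, abs_of_pos hR, RCLike.norm_conj]
      rw [lt_div_iff₀ (norm_pos_iff.2 ha0)]; nlinarith
    have hzb : z ≠ b := by rintro rfl; linarith
    have hwb : w ≠ b := by intro h; rw [h] at hw; linarith
    have main2 := abs_log_norm_sub_le hzb hwb hwz h0 h1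
    have e : ∀ x : ℂ, x ≠ a → x ≠ b → Real.log ‖canonicalFactor R a x‖ = Real.log ‖a‖ - Real.log R + Real.log ‖x - b‖ - Real.log ‖x - a‖ := by
      intro x hx hxb
      have h6 : ‖x - a‖ ≠ 0 := norm_ne_zero_iff.2 (sub_ne_zero.2 hx)
      have h7 : ‖x - b‖ ≠ 0 := norm_ne_zero_iff.2 (sub_ne_zero.2 hxb)
      have h8 : ‖a‖ ≠ 0 := norm_ne_zero_iff.2 ha0
      rw [← Real.log_div h8 hR.ne', ← Real.log_mul (by positivity) h7, ← Real.log_div (by positivity) h6]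
      congr 1
      have : canonicalFactor R a x = - ((starRingEnd ℂ) a / R * (x - b) / (x - a)) := by
        rw [canonicalFactor_apply, hb]
        have := sub_ne_zero.2 hx
        field_simp
        ring
      rw [this]
      simp [abs_of_pos hR]
    rw [e w hwa hwb, e z hza hzb, mul_add]
    calc _ = |(Real.log ‖w - b‖ - Real.log ‖z - b‖) - (Real.log ‖w - a‖ - Real.log ‖z - a‖)| := by congr 1; ring
      _ ≤ |(Real.log ‖w - b‖ - Real.log ‖z - b‖)| + |(Real.log ‖w - a‖ - Real.log ‖z - a‖)| := abs_sub _ _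
      _ ≤ _ := by linarith

end C2

section C3

open MeasureTheory Filter Metric Complex

theorem exists_delta {α : ℝ} (h0 : 0 < α) (A : Finset ℂ) (x : ℂ) (hx : x ∉ A) :
    ∃ δ : ℝ, 0 < δ ∧ δ ≤ 1 ∧ (∀ a ∈ A, δ ≤ ‖x - a‖) ∧
      -Real.log δ ≤ ∑ a ∈ A, α⁻¹ * ‖x - a‖ ^ (-α) := by
  have hq : ∀ a, 0 ≤ α⁻¹ * ‖x - a‖ ^ (-α) := fun a => by positivity
  induction A using Finset.induction_on with
  | empty => exact ⟨1, by simp⟩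
  | insert b A hb ih =>
    simp only [Finset.mem_insert, not_or] at hx
    obtain ⟨δ, h1, h2, h3, h4⟩ := ih hx.2
    have hxb : 0 < ‖x - b‖ := norm_pos_iff.2 (sub_ne_zero.2 hx.1)
    refine ⟨min δ ‖x - b‖, lt_min h1 hxb, (min_le_left _ _).trans h2, ?_, ?_⟩
    · intro a ha
      rcases Finset.mem_insert.1 ha with rfl | ha
      · exact min_le_right _ _
      · exact (min_le_left _ _).trans (h3 a ha)
    · rw [Finset.sum_insert hb]
      have hs : 0 ≤ ∑ a ∈ A, α⁻¹ * ‖x - a‖ ^ (-α) := Finset.sum_nonneg (fun a _ => hq a)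
      rcases min_choice δ ‖x - b‖ with h | h
      · rw [h]; linarith [hq b]
      · rw [h]
        have := Real.log_le_rpow_div (x := ‖x - b‖⁻¹) (by positivity) h0
        rw [Real.log_inv, Real.inv_rpow hxb.le, ← Real.rpow_neg hxb.le] at this
        have e : ‖x - b‖ ^ (-α) / α = α⁻¹ * ‖x - b‖ ^ (-α) := by ring
        linarith

theorem pointwise_est {f : ℂ → ℂ} (hNF : MeromorphicNFOn f Set.univ)
    (ho : ∀ z, meromorphicOrderAt f z ≠ ⊤) {R : ℝ} (hR : 0 < R)
    (hS : ∀ z ∈ sphere (0:ℂ) R, meromorphicOrderAt f z = 0)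
    {A : Finset ℂ} (hA : ∀ a, a ∈ A ↔ a ∈ ball (0:ℂ) R ∧ meromorphicOrderAt f a ≠ 0)
    (hPJ : ∀ w ∈ ball (0:ℂ) R, w ∉ A →
        Real.log ‖f w‖ = Real.circleAverage (fun ζ => poissonKernel 0 w ζ * Real.log ‖f ζ‖) 0 R
          - ∑ a ∈ A, ((meromorphicOrderAt f a).untop₀ : ℝ) * Real.log ‖canonicalFactor R a w‖)
    {α : ℝ} (h0 : 0 < α) (h1 : α ≤ 1) (c : ℂ) (k : ℕ) {z : ℂ} (hzA : z ∉ A) (hzcA : z + c ∉ A)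
    {d : ℝ} (hdc : d = ‖c‖ + 1) (hd : 2 * d ≤ R - ‖z‖) :
    Real.posLog ‖iteratedDeriv k f (z + c) / f z‖ ≤ (Real.log k.factorial + k * Real.log 2) +
      4 * d / (R - ‖z‖) * Real.circleAverage (fun ζ => poissonKernel 0 z ζ * |Real.log ‖f ζ‖|) 0 R +
      (k + 2 * d ^ α) / α * ∑ a ∈ A, |((meromorphicOrderAt f a).untop₀ : ℝ)| *
        (‖z - a‖ ^ (-α) + ‖z - R ^ 2 / (starRingEnd ℂ) a‖ ^ (-α) + ‖z - (a - c)‖ ^ (-α) +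
          ‖z - (R ^ 2 / (starRingEnd ℂ) a - c)‖ ^ (-α)) := by
  have hd1 : 1 ≤ d := by rw [hdc]; linarith [norm_nonneg c]
  have hzR : ‖z‖ < R := by linarith
  have hcd : ‖c‖ = d - 1 := by linarith
  have good : ∀ w, ‖w‖ < R → w ∉ A → AnalyticAt ℂ f w ∧ f w ≠ 0 := by
    intro w hw hwA
    apply nf_order_zero hNF
    by_contra hcon
    exact hwA ((hA w).2 ⟨by simpa using hw, hcon⟩)
  have hu : ContinuousOn (fun ζ => Real.log ‖f ζ‖) (sphere (0:ℂ) R) := by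
    intro ζ hζ
    have := nf_order_zero hNF (hS ζ hζ)
    exact (this.1.continuousAt.norm.log (norm_ne_zero_iff.2 this.2)).continuousWithinAt
  obtain ⟨δ, hδ0, hδ1, hδA, hδlog⟩ := exists_delta h0 A (z + c) hzcA
  set D : ℂ → ℝ := fun a => ((meromorphicOrderAt f a).untop₀ : ℝ) with hD
  have hD1 : ∀ a ∈ A, 1 ≤ |D a| := by
    intro a ha
    have : (meromorphicOrderAt f a).untop₀ ≠ 0 := by
      have := ((hA a).1 ha).2
      simp [this, ho a]
    have := Int.one_le_abs this
    simp only [hD]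
    exact_mod_cast this
  set P : ℝ := Real.circleAverage (fun ζ => poissonKernel 0 z ζ * |Real.log ‖f ζ‖|) 0 R with hP
  set b : ℂ → ℂ := fun a => R ^ 2 / (starRingEnd ℂ) a with hb
  have hbn : ∀ a ∈ A, a ≠ 0 → R < ‖b a‖ := by
    intro a ha ha0
    have haR : ‖a‖ < R := by simpa using ((hA a).1 ha).1
    simp only [hb, norm_div, norm_pow, norm_real, Real.norm_eq_abs, abs_of_pos hR, RCLike.norm_conj]
    rw [lt_div_iff₀ (norm_pos_iff.2 ha0)]; nlinarith
  set Q : ℂ → ℝ := fun a => (‖z - a‖ ^ (-α) + ‖z - b a‖ ^ (-α) + ‖z - (a - c)‖ ^ (-α) +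
          ‖z - (b a - c)‖ ^ (-α)) with hQ
  -- bound on small disc
  have near : ∀ w, ‖w - (z + c)‖ ≤ δ / 2 → ‖w - z‖ ≤ d ∧ ‖w‖ < R ∧ w ∉ A := by
    intro w hw
    have h2 : ‖w - z‖ ≤ d := by
      calc ‖w - z‖ = ‖(w - (z + c)) + c‖ := by congr 1; ring
        _ ≤ ‖w - (z + c)‖ + ‖c‖ := norm_add_le _ _
        _ ≤ d := by linarith
    refine ⟨h2, ?_, ?_⟩
    · have : ‖w‖ ≤ ‖w - z‖ + ‖z‖ := by simpa using norm_add_le (w - z) z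
      linarith
    · intro hwA
      have := hδA w hwA
      rw [norm_sub_rev] at this
      linarith
  have half : ∀ w, ‖w - (z + c)‖ ≤ δ / 2 → ∀ e, 0 < ‖z - (e - c)‖ → δ ≤ ‖z - (e - c)‖ → ‖w - e‖ ^ (-α) ≤ 2 * ‖z - (e - c)‖ ^ (-α) := by
    intro w hw e he hδe
    have h2 : ‖z - (e - c)‖ / 2 ≤ ‖w - e‖ := by
      have : ‖z - (e - c)‖ ≤ ‖w - e‖ + ‖w - (z + c)‖ := by
        calc ‖z - (e - c)‖ = ‖(w - e) - (w - (z + c))‖ := by congr 1; ring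
          _ ≤ _ := norm_sub_le _ _
      linarith
    calc ‖w - e‖ ^ (-α) ≤ (‖z - (e - c)‖ / 2) ^ (-α) :=
          Real.rpow_le_rpow_of_nonpos (by positivity) h2 (by linarith)
      _ = 2 ^ α * ‖z - (e - c)‖ ^ (-α) := by
          rw [Real.div_rpow he.le (by norm_num), Real.rpow_neg (by norm_num : (0:ℝ) ≤ 2)]
          field_simp
      _ ≤ 2 * ‖z - (e - c)‖ ^ (-α) := by
          gcongr
          simpa using Real.rpow_le_rpow_of_exponent_le (by norm_num : (1:ℝ) ≤ 2) h1
  have hδa : ∀ a ∈ A, δ ≤ ‖z - (a - c)‖ := by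
    intro a ha
    have := hδA a ha
    rwa [show z - (a - c) = z + c - a by ring]
  have hδb : ∀ a ∈ A, δ ≤ ‖z - (b a - c)‖ := by
    intro a ha
    by_cases ha0 : a = 0
    · have := hδa a ha
      simp only [hb]
      rw [ha0] at this ⊢
      simpa using this
    · have h2 := hbn a ha ha0
      have h3 : ‖b a‖ ≤ ‖z - (b a - c)‖ + ‖z + c‖ := by
        calc ‖b a‖ = ‖(z + c) - (z - (b a - c))‖ := by congr 1; ring
          _ ≤ ‖z + c‖ + ‖z - (b a - c)‖ := norm_sub_le _ _
          _ = _ := add_comm _ _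
      have h4 := norm_add_le z c
      linarith
  set M : ℝ := 4 * d / (R - ‖z‖) * P + (2 * d ^ α) / α * ∑ a ∈ A, |D a| * Q a with hM
  have hQ0 : ∀ a, 0 ≤ Q a := fun a => by positivity
  have hlog : ∀ w, ‖w - (z + c)‖ ≤ δ / 2 → Real.log ‖f w‖ ≤ Real.log ‖f z‖ + M := by
    intro w hw
    obtain ⟨h2, h3, h4⟩ := near w hw
    rw [hPJ w (by simpa using h3) h4, hPJ z (by simpa using hzR) hzA]
    have h5 := (abs_le.1 (poisson_int_diff hu hzR h3 h2 hd)).2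
    have h6 : ∑ a ∈ A, D a * Real.log ‖canonicalFactor R a z‖ - ∑ a ∈ A, D a * Real.log ‖canonicalFactor R a w‖ ≤ (2 * d ^ α) / α * ∑ a ∈ A, |D a| * Q a := by
      rw [← Finset.sum_sub_distrib, Finset.mul_sum]
      apply Finset.sum_le_sum
      intro a ha
      have haR : ‖a‖ < R := by simpa using ((hA a).1 ha).1
      have hza : z ≠ a := by rintro rfl; exact hzA ha
      have hwa : w ≠ a := by rintro rfl; exact h4 ha
      have h7 := canonical_diff hza hwa hzR h3 haR h2 h0 h1
      have h8 := half w hw a (hδ0.trans_le (hδa a ha)) (hδa a ha)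
      have h9 := half w hw (b a) (hδ0.trans_le (hδb a ha)) (hδb a ha)
      have hn1 : 0 ≤ ‖z - a‖ ^ (-α) := by positivity
      have hn2 : 0 ≤ ‖z - b a‖ ^ (-α) := by positivity
      have h10 : ((‖z - a‖ ^ (-α) + ‖w - a‖ ^ (-α)) + (‖z - b a‖ ^ (-α) + ‖w - b a‖ ^ (-α))) ≤ 2 * Q a := by
        simp only [hQ]; linarith
      have h11 : |Real.log ‖canonicalFactor R a w‖ - Real.log ‖canonicalFactor R a z‖| ≤ d ^ α / α * (2 * Q a) :=
        h7.trans (mul_le_mul_of_nonneg_left h10 (by positivity))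
      calc D a * Real.log ‖canonicalFactor R a z‖ - D a * Real.log ‖canonicalFactor R a w‖
          = - (D a * (Real.log ‖canonicalFactor R a w‖ - Real.log ‖canonicalFactor R a z‖)) := by ring
        _ ≤ |D a * (Real.log ‖canonicalFactor R a w‖ - Real.log ‖canonicalFactor R a z‖)| := neg_le_abs _
        _ = |D a| * |(Real.log ‖canonicalFactor R a w‖ - Real.log ‖canonicalFactor R a z‖)| := abs_mul _ _
        _ ≤ |D a| * (d ^ α / α * (2 * Q a)) := mul_le_mul_of_nonneg_left h11 (abs_nonneg _)
        _ = _ := by ring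
    linarith
  have hfz : 0 < ‖f z‖ := norm_pos_iff.2 (good z hzR hzA).2
  have hbd : ∀ w ∈ sphere (z + c) (δ / 2), ‖f w‖ ≤ ‖f z‖ * Real.exp M := by
    intro w hw
    have hw' : ‖w - (z + c)‖ ≤ δ / 2 := le_of_eq (by simpa [dist_eq_norm] using hw)
    obtain ⟨h2, h3, h4⟩ := near w hw'
    have hfw : 0 < ‖f w‖ := norm_pos_iff.2 (good w h3 h4).2
    rw [← Real.exp_log hfw, ← Real.exp_log hfz, ← Real.exp_add]
    exact Real.exp_le_exp.2 (hlog w hw')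
  have hdiff : DiffContOnCl ℂ f (ball (z + c) (δ / 2)) := by
    apply DifferentiableOn.diffContOnCl
    rw [closure_ball _ (by positivity)]
    intro w hw
    obtain ⟨h2, h3, h4⟩ := near w (by simpa [dist_eq_norm] using hw)
    exact (good w h3 h4).1.differentiableAt.differentiableWithinAt
  have hC := Complex.norm_iteratedDeriv_le_of_forall_mem_sphere_norm_le k (by positivity) hdiff hbd
  have hM0 : 0 ≤ M := by
    have hRz : 0 < R - ‖z‖ := by linarith
    have := (abs_nonneg _).trans (poisson_int_diff hu hzR hzR (w := z) (by simp; linarith) hd)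
    have h12 : 0 ≤ ∑ a ∈ A, |D a| * Q a := Finset.sum_nonneg (fun a _ => mul_nonneg (abs_nonneg _) (hQ0 a))
    have h13 : 0 ≤ (2 * d ^ α) / α * ∑ a ∈ A, |D a| * Q a := by positivity
    linarith
  have hfac : (1:ℝ) ≤ k.factorial := by exact_mod_cast Nat.one_le_iff_ne_zero.2 (Nat.factorial_ne_zero k)
  have hratio : ‖iteratedDeriv k f (z + c) / f z‖ ≤ k.factorial * Real.exp M / (δ / 2) ^ k := by
    rw [norm_div, div_le_iff₀ hfz]
    refine hC.trans (le_of_eq ?_)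
    ring
  have hge : 1 ≤ k.factorial * Real.exp M / (δ / 2) ^ k := by
    rw [one_le_div (by positivity)]
    have : (δ / 2) ^ k ≤ 1 := pow_le_one₀ (by positivity) (by linarith)
    have h14 : 1 ≤ Real.exp M := Real.one_le_exp hM0
    nlinarith
  have hfin : Real.posLog ‖iteratedDeriv k f (z + c) / f z‖ ≤ Real.log k.factorial + M + k * (Real.log 2 - Real.log δ) := by
    refine (Real.posLog_le_posLog (norm_nonneg _) hratio).trans (le_of_eq ?_)
    rw [Real.posLog_eq_log (by rw [abs_of_nonneg (by linarith)]; exact hge), Real.log_div (by positivity) (by positivity), Real.log_mul (by positivity) (by positivity),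
      Real.log_exp, Real.log_pow, Real.log_div hδ0.ne' (by norm_num)]
    ring
  have hk : (k:ℝ) * (-Real.log δ) ≤ k / α * ∑ a ∈ A, |D a| * Q a := by
    have h15 : -Real.log δ ≤ α⁻¹ * ∑ a ∈ A, |D a| * Q a := by
      refine hδlog.trans ?_
      rw [Finset.mul_sum]
      apply Finset.sum_le_sum
      intro a ha
      apply mul_le_mul_of_nonneg_left _ (by positivity)
      have h16 : ‖z + c - a‖ ^ (-α) ≤ Q a := by
        simp only [hQ]
        rw [show z - (a - c) = z + c - a by ring]
        have hn1 : 0 ≤ ‖z - a‖ ^ (-α) := by positivity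
        have hn2 : 0 ≤ ‖z - b a‖ ^ (-α) := by positivity
        have hn3 : 0 ≤ ‖z - (b a - c)‖ ^ (-α) := by positivity
        linarith
      nlinarith [hD1 a ha, hQ0 a]
    calc (k:ℝ) * (-Real.log δ) ≤ k * (α⁻¹ * ∑ a ∈ A, |D a| * Q a) := by gcongr
      _ = _ := by ring
  refine hfin.trans ?_
  have : (k + 2 * d ^ α) / α * ∑ a ∈ A, |D a| * Q a = k / α * ∑ a ∈ A, |D a| * Q a + (2 * d ^ α) / α * ∑ a ∈ A, |D a| * Q a := by ring
  rw [this]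
  simp only [hM]
  linarith

end C3

section D1

open MeasureTheory Filter Metric Complex

theorem circleAverage_mono_ae {F G : ℂ → ℝ} {r : ℝ} (hr : 0 < r) (hF : ∀ z, 0 ≤ F z) (hG : CircleIntegrable G 0 r)
    {S : Set ℂ} (hS : S.Countable) (h : ∀ z ∈ sphere (0:ℂ) r, z ∉ S → F z ≤ G z) :
    Real.circleAverage F 0 r ≤ Real.circleAverage G 0 r := by
  simp only [Real.circleAverage_def, smul_eq_mul]
  apply mul_le_mul_of_nonneg_left _ (by positivity)
  rw [intervalIntegral.integral_of_le Real.two_pi_pos.le, intervalIntegral.integral_of_le Real.two_pi_pos.le]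
  apply integral_mono_of_nonneg
  · exact Eventually.of_forall (fun θ => hF _)
  · exact (intervalIntegrable_iff_integrableOn_Ioc_of_le Real.two_pi_pos.le).1 hG
  · have hc : ((circleMap 0 r) ⁻¹' S).Countable := hS.preimage_circleMap 0 hr.ne'
    have := hc.ae_notMem (volume.restrict (Set.Ioc 0 (2 * Real.pi)))
    filter_upwards [this] with θ hθ
    exact h _ (circleMap_mem_sphere 0 hr.le θ) hθ

theorem prox_est {f : ℂ → ℂ} (hNF : MeromorphicNFOn f Set.univ)
    (ho : ∀ z, meromorphicOrderAt f z ≠ ⊤) {α : ℝ} (h0 : 0 < α) (h1 : α < 1) (c : ℂ) (k : ℕ) :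
    ∃ C0 C1 : ℝ, 0 ≤ C0 ∧ 0 ≤ C1 ∧ ∀ r R : ℝ, 0 < r → 2 * (‖c‖ + 1) ≤ R - r →
      (∀ z ∈ sphere (0:ℂ) R, meromorphicOrderAt f z = 0) →
      ∃ A : Finset ℂ, (∀ a, a ∈ A ↔ a ∈ ball (0:ℂ) R ∧ meromorphicOrderAt f a ≠ 0) ∧
        Real.circleAverage (fun z => Real.posLog ‖iteratedDeriv k f (z + c) / f z‖) 0 r ≤
          C0 + 4 * (‖c‖ + 1) / (R - r) * Real.circleAverage (fun ζ => |Real.log ‖f ζ‖|) 0 R +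
          C1 * r ^ (-α) * ∑ a ∈ A, |((meromorphicOrderAt f a).untop₀ : ℝ)| := by
  obtain ⟨K, hK0, hK⟩ := circle_rpow h0 h1
  set d : ℝ := ‖c‖ + 1 with hd
  have hd0 : 0 < d := by positivity
  have hfac : (1:ℝ) ≤ k.factorial := by exact_mod_cast Nat.one_le_iff_ne_zero.2 (Nat.factorial_ne_zero k)
  refine ⟨Real.log k.factorial + k * Real.log 2, (k + 2 * d ^ α) / α * (4 * K), ?_, by positivity, ?_⟩
  · have := Real.log_nonneg hfac
    have := Real.log_nonneg (one_le_two : (1:ℝ) ≤ 2)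
    positivity
  intro r R hr hrR hS
  have hR : 0 < R := by linarith
  obtain ⟨A, hA, hPJ⟩ := poisson_jensen hNF ho hR hS
  refine ⟨A, hA, ?_⟩
  have hu : ContinuousOn (fun ζ => |Real.log ‖f ζ‖|) (sphere (0:ℂ) R) := by
    intro ζ hζ
    have := nf_order_zero hNF (hS ζ hζ)
    exact ((this.1.continuousAt.norm.log (norm_ne_zero_iff.2 this.2)).abs).continuousWithinAt
  obtain ⟨pm, pi⟩ := poisson_mean (hu.circleIntegrable hR.le) hr (by linarith : r < R)
  set P : ℂ → ℝ := fun z => Real.circleAverage (fun ζ => poissonKernel 0 z ζ * |Real.log ‖f ζ‖|) 0 R with hP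
  set D : ℂ → ℝ := fun a => ((meromorphicOrderAt f a).untop₀ : ℝ) with hD
  set b : ℂ → ℂ := fun a => R ^ 2 / (starRingEnd ℂ) a with hb
  set Q : ℂ → ℂ → ℝ := fun a z => (‖z - a‖ ^ (-α) + ‖z - b a‖ ^ (-α) + ‖z - (a - c)‖ ^ (-α) +
          ‖z - (b a - c)‖ ^ (-α)) with hQ
  have hi := fun e => (hK r hr e).1
  have ha := fun e => (hK r hr e).2
  have hQi : ∀ a, CircleIntegrable (Q a) 0 r := fun a =>
    (((hi a).add (hi (b a))).add (hi (a - c))).add (hi (b a - c))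
  have hQa : ∀ a, Real.circleAverage (Q a) 0 r ≤ 4 * K * r ^ (-α) := by
    intro a
    simp only [hQ]
    rw [Real.circleAverage_fun_add (((hi a).fun_add (hi (b a))).fun_add (hi (a - c))) (hi (b a - c)),
      Real.circleAverage_fun_add ((hi a).fun_add (hi (b a))) (hi (a - c)), Real.circleAverage_fun_add (hi a) (hi (b a))]
    linarith [ha a, ha (b a), ha (a - c), ha (b a - c)]
  set C0 : ℝ := Real.log k.factorial + k * Real.log 2 with hC0
  set C1 : ℝ := (k + 2 * d ^ α) / α with hC1
  have hC1' : 0 ≤ C1 := by positivity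
  have hi1 : CircleIntegrable (fun z => 4 * d / (R - r) * P z) 0 r := pi.const_mul _
  have hi2 : CircleIntegrable (fun z => ∑ a ∈ A, |D a| * Q a z) 0 r := by
    exact CircleIntegrable.fun_sum A (fun a _ => (hQi a).const_mul _)
  have hi3 : CircleIntegrable (fun z => C1 * ∑ a ∈ A, |D a| * Q a z) 0 r := hi2.const_mul _
  have hi0 : CircleIntegrable (fun z => C0) 0 r := circleIntegrable_const _ _ _
  have step : Real.circleAverage (fun z => Real.posLog ‖iteratedDeriv k f (z + c) / f z‖) 0 r ≤
      Real.circleAverage (fun z => C0 + 4 * d / (R - r) * P z + C1 * ∑ a ∈ A, |D a| * Q a z) 0 r := by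
    apply circleAverage_mono_ae hr (fun z => Real.posLog_nonneg) ((hi0.add hi1).add hi3)
      (S := (A : Set ℂ) ∪ ((fun x => x + c) ⁻¹' (A : Set ℂ)))
    · refine A.countable_toSet.union (A.countable_toSet.preimage ?_)
      exact add_left_injective c
    · intro z hz hzS
      simp only [Set.mem_union, not_or, Set.mem_preimage, Finset.mem_coe] at hzS
      have hzr : ‖z‖ = r := by simpa using hz
      have := pointwise_est hNF ho hR hS hA hPJ h0 h1.le c k hzS.1 hzS.2 hd (by rw [hzr]; exact hrR)
      rw [hzr] at this
      exact this
  refine step.trans ?_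
  rw [Real.circleAverage_fun_add (hi0.fun_add hi1) hi3, Real.circleAverage_fun_add hi0 hi1, Real.circleAverage_const]
  have e1 : Real.circleAverage (fun z => 4 * d / (R - r) * P z) 0 r = 4 * d / (R - r) * Real.circleAverage (fun ζ => |Real.log ‖f ζ‖|) 0 R := by
    rw [← pm]
    exact Real.circleAverage_fun_smul (a := 4 * d / (R - r)) (f := P)
  have e2 : Real.circleAverage (fun z => C1 * ∑ a ∈ A, |D a| * Q a z) 0 r = C1 * ∑ a ∈ A, |D a| * Real.circleAverage (Q a) 0 r := by
    have : (fun z => C1 * ∑ a ∈ A, |D a| * Q a z) = (fun z => C1 • ∑ a ∈ A, |D a| • Q a z) := rfl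
    rw [this, Real.circleAverage_fun_smul, Real.circleAverage_fun_sum (f := fun a z => |D a| • Q a z) (fun a _ => (hQi a).const_mul |D a|)]
    rw [smul_eq_mul]
    congr 1
    apply Finset.sum_congr rfl
    intro a _
    rw [Real.circleAverage_fun_smul, smul_eq_mul]
  rw [e1, e2]
  have e3 : C1 * ∑ a ∈ A, |D a| * Real.circleAverage (Q a) 0 r ≤ C1 * (4 * K) * r ^ (-α) * ∑ a ∈ A, |D a| := by
    calc C1 * ∑ a ∈ A, |D a| * Real.circleAverage (Q a) 0 r ≤ C1 * ∑ a ∈ A, |D a| * (4 * K * r ^ (-α)) := by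
          gcongr with a ha; exact hQa a
      _ = _ := by rw [← Finset.sum_mul]; ring
  linarith

end D1

section E1

open MeasureTheory Filter Metric
open ValueDistribution in
lemma avg_abs_log {f : ℂ → ℂ} (hf : Meromorphic f) : ∃ C, 0 ≤ C ∧ ∀ R, 1 ≤ R →
    Real.circleAverage (fun z => |Real.log ‖f z‖|) 0 R ≤ 2 * characteristic f ⊤ R + C ∧
    logCounting f ⊤ R + logCounting f 0 R ≤ 2 * characteristic f ⊤ R + C := by
  refine ⟨|Real.log ‖meromorphicTrailingCoeffAt f 0‖|, abs_nonneg _, fun R hR => ?_⟩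
  have h1 := characteristic_sub_characteristic_inv_of_ne_zero hf (by linarith : R ≠ 0)
  have h2 := neg_abs_le (Real.log ‖meromorphicTrailingCoeffAt f 0‖)
  have hN := logCounting_nonneg (f := f) (e := ⊤) hR
  have hN' := logCounting_nonneg (f := f⁻¹) (e := ⊤) hR
  have hP := proximity_nonneg (f := f) (a := ⊤) R
  have hP' := proximity_nonneg (f := f⁻¹) (a := ⊤) R
  have e1 : characteristic f ⊤ R = proximity f ⊤ R + logCounting f ⊤ R := rfl
  have e2 : characteristic f⁻¹ ⊤ R = proximity f⁻¹ ⊤ R + logCounting f⁻¹ ⊤ R := rfl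
  simp only [Pi.zero_apply] at hP hP'
  have e3 : logCounting f⁻¹ ⊤ R = logCounting f 0 R := by rw [logCounting_inv]
  have e4 : Real.circleAverage (fun z => |Real.log ‖f z‖|) 0 R
      = proximity f ⊤ R + proximity f⁻¹ ⊤ R := by
    rw [proximity_top, proximity_top, ← Real.circleAverage_add]
    · congr 1
      ext z
      simp only [Pi.add_apply, Pi.inv_apply, norm_inv]
      simp only [Real.posLog, Real.log_inv]
      rcases le_total 0 (Real.log ‖f z‖) with h | h
      · rw [abs_of_nonneg h, max_eq_right h, max_eq_left (by linarith)]; ring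
      · rw [abs_of_nonpos h, max_eq_left h, max_eq_right (by linarith)]; ring
    · exact hf.meromorphicOn.circleIntegrable_posLog_norm
    · exact hf.inv.meromorphicOn.circleIntegrable_posLog_norm
  constructor <;> linarith

open Function.locallyFinsuppWithin in
lemma count_le_logCounting {D : Function.locallyFinsupp ℂ ℤ} (hD : 0 ≤ D) (A : Finset ℂ) {R R' : ℝ}
    (hR : 1 ≤ R) (hRR : R < R') (hA : ∀ a ∈ A, a ∈ ball (0:ℂ) R) :
    (∑ a ∈ A, (D a : ℝ)) * Real.log (R' / R) ≤ logCounting D R' := by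
  classical
  have h1 : ∑ a ∈ A, D a • single a (1:ℤ) ≤ D := by
    intro z
    have : (∑ a ∈ A, D a • single a (1:ℤ)) z = ∑ a ∈ A, D a * (if z = a then 1 else 0) := by
      rw [coe_sum]
      simp only [Finset.sum_apply]
      refine Finset.sum_congr rfl fun a _ => ?_
      rw [coe_zsmul, Pi.smul_apply, smul_eq_mul, single_apply]
    rw [this]
    simp only [mul_ite, mul_one, mul_zero, Finset.sum_ite_eq]
    split_ifs
    · exact le_rfl
    · exact hD z
  have h2 := logCounting_le h1 (r := R') (by linarith)
  rw [map_sum] at h2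
  simp only [map_zsmul, Finset.sum_apply, Pi.smul_apply] at h2
  refine le_trans ?_ h2
  rw [Finset.sum_mul]
  refine Finset.sum_le_sum fun a ha => ?_
  have haR := hA a ha
  rw [mem_ball_zero_iff] at haR
  rw [logCounting_single_eq_log_sub_const (by linarith)]
  rw [zsmul_eq_mul]
  have : (0:ℝ) ≤ D a := by exact_mod_cast hD a
  refine mul_le_mul_of_nonneg_left ?_ this
  rw [Real.log_div (by linarith) (by linarith)]
  rcases eq_or_ne a 0 with rfl | h0
  · simp; exact Real.log_nonneg hR
  · have := Real.log_le_log (norm_pos_iff.2 h0) haR.le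
    push_cast; linarith

open ValueDistribution in
lemma count_bound {f : ℂ → ℂ} (hf : Meromorphic f) (A : Finset ℂ) {R R' : ℝ}
    (hR : 1 ≤ R) (hRR : R < R') (hA : ∀ a ∈ A, a ∈ ball (0:ℂ) R) :
    (∑ a ∈ A, |((meromorphicOrderAt f a).untop₀ : ℝ)|) * Real.log (R' / R)
      ≤ logCounting f ⊤ R' + logCounting f 0 R' := by
  have h1 := count_le_logCounting (D := (MeromorphicOn.divisor f Set.univ)⁻)
    (negPart_nonneg _) A hR hRR hA
  have h2 := count_le_logCounting (D := (MeromorphicOn.divisor f Set.univ)⁺)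
    (posPart_nonneg _) A hR hRR hA
  rw [logCounting_top, logCounting_zero]
  refine le_trans (le_of_eq ?_) (add_le_add h1 h2)
  rw [← add_mul, ← Finset.sum_add_distrib]
  congr 1
  refine Finset.sum_congr rfl fun a _ => ?_
  rw [Function.locallyFinsuppWithin.negPart_apply, Function.locallyFinsuppWithin.posPart_apply, 
    MeromorphicOn.divisor_apply hf.meromorphicOn (Set.mem_univ a), ← Int.cast_abs, ← Int.cast_add, add_comm, posPart_add_negPart]

end E1

section E2

open MeasureTheory Filter Metric

lemma order_ne_zero_countable {f : ℂ → ℂ} (hf : Meromorphic f)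
    (ho : ∀ z, meromorphicOrderAt f z ≠ ⊤) : {z | meromorphicOrderAt f z ≠ 0}.Countable := by
  have h1 := (MeromorphicOn.divisor f Set.univ).discreteSupport
  have h2 : {z | meromorphicOrderAt f z ≠ 0} ⊆ (MeromorphicOn.divisor f Set.univ).support := by
    intro z hz
    rw [Function.mem_support, MeromorphicOn.divisor_apply hf.meromorphicOn (Set.mem_univ z)]
    intro h
    rw [WithTop.untop₀_eq_zero] at h
    exact h.elim hz (ho z)
  refine Set.Countable.mono h2 ?_
  have := h1.to_subtype
  exact Set.countable_coe_iff.1 (TopologicalSpace.separableSpace_iff_countable.1 inferInstance)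

lemma exists_good_radius {f : ℂ → ℂ} (hf : Meromorphic f)
    (ho : ∀ z, meromorphicOrderAt f z ≠ ⊤) {a b : ℝ} (hab : a < b) :
    ∃ R ∈ Set.Ioo a b, ∀ z ∈ sphere (0:ℂ) R, meromorphicOrderAt f z = 0 := by
  by_contra! h
  have h1 : Set.Ioo a b ⊆ norm '' {z | meromorphicOrderAt f z ≠ 0} := by
    intro R hR
    obtain ⟨z, hz, hz'⟩ := h R hR
    exact ⟨z, hz', by simpa using hz⟩
  have h2 := ((order_ne_zero_countable hf ho).image norm).mono h1
  have h3 : (volume (Set.Ioo a b)) = 0 := h2.measure_zero _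
  rw [Real.volume_Ioo, ENNReal.ofReal_eq_zero] at h3
  linarith

open ValueDistribution in
lemma char_tendsto {f : ℂ → ℂ} (hf : Meromorphic f) {z0 : ℂ} (hz : AnalyticAt ℂ f z0)
    (hne : meromorphicOrderAt (fun z => f z - f z0) z0 ≠ ⊤) :
    Tendsto (characteristic f ⊤) atTop atTop := by
  set g : ℂ → ℂ := fun z => f z - f z0 with hg
  have hgm : Meromorphic g := fun z => (hf z).sub (MeromorphicAt.const _ _)
  obtain ⟨C, hC, hb⟩ := avg_abs_log hgm
  have hord : 1 ≤ |((meromorphicOrderAt g z0).untop₀ : ℝ)| := by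
    have hga : AnalyticAt ℂ g z0 := hz.sub analyticAt_const
    have h0 : meromorphicOrderAt g z0 ≠ 0 := by
      intro h
      have := (hga.meromorphicNFAt.meromorphicOrderAt_eq_zero_iff).1 h
      simp [hg] at this
    have : (meromorphicOrderAt g z0).untop₀ ≠ 0 := by
      rw [Ne, WithTop.untop₀_eq_zero]; tauto
    exact_mod_cast Int.one_le_abs this
  have key : ∀ᶠ R in atTop, Real.log (R / (‖z0‖ + 1)) ≤
      2 * (characteristic f ⊤ R + (Real.posLog ‖f z0‖ + Real.log 2)) + C := by
    filter_upwards [eventually_gt_atTop (‖z0‖ + 1)] with R hR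
    have hn := norm_nonneg z0
    have h1 := count_bound hgm {z0} (R := ‖z0‖ + 1) (by linarith) hR (by simp)
    rw [Finset.sum_singleton] at h1
    have h2 := (hb R (by linarith)).2
    have h3 := abs_characteristic_sub_characteristic_shift_le (a₀ := f z0) (r := R) hf
    have h4 := (abs_le.1 h3).1
    have h5 : 0 ≤ Real.log (R / (‖z0‖ + 1)) := Real.log_nonneg (by rw [le_div_iff₀ (by linarith)]; linarith)
    have h6 : Real.log (R / (‖z0‖ + 1)) ≤ _ := le_mul_of_one_le_left h5 hord
    have : characteristic (fun x => f x - f z0) ⊤ R = characteristic g ⊤ R := rfl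
    linarith
  have ht : Tendsto (fun R : ℝ => Real.log (R / (‖z0‖ + 1))) atTop atTop :=
    Real.tendsto_log_atTop.comp (tendsto_id.atTop_div_const (by positivity))
  have ht2 := tendsto_atTop_mono' _ key ht
  rw [Filter.tendsto_atTop] at ht2 ⊢
  intro b
  filter_upwards [ht2 (2 * (b + (Real.posLog ‖f z0‖ + Real.log 2)) + C)] with R hR
  linarith

end E2

section H1

open MeasureTheory Filter Metric

open ValueDistribution in
lemma main_nf {f : ℂ → ℂ} (hNF : MeromorphicNFOn f Set.univ)
    (ho : ∀ z, meromorphicOrderAt f z ≠ ⊤) (c : ℂ) (k : ℕ) {σ : ℝ} (hσ0 : 0 ≤ σ) (hσ1 : σ < 1)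
    (hT : Tendsto (characteristic f ⊤) atTop atTop)
    (hgr : ∀ᶠ r in atTop, Real.log (characteristic f ⊤ r) ≤ r ^ σ) :
    ∃ E : Set ℝ, E ⊆ Set.Ioi 1 ∧ (∫⁻ t in E, ENNReal.ofReal t⁻¹) < ⊤ ∧
    Tendsto (fun r => Real.circleAverage (fun z => Real.posLog ‖iteratedDeriv k f (z + c) / f z‖) 0 r
      / characteristic f ⊤ r) (atTop ⊓ 𝓟 Eᶜ) (nhds 0) := by
  have hfm : Meromorphic f := fun z => (hNF (Set.mem_univ z)).meromorphicAt
  set T := characteristic f ⊤ with hTdef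
  have hmono : MonotoneOn T (Set.Ioi 0) := characteristic_monotoneOn hfm
  set δ := (1 - σ) / 2 with hδ
  have hδ0 : 0 < δ := by rw [hδ]; linarith
  have hδ1 : δ ≤ 1 / 2 := by rw [hδ]; linarith
  set α := 1 - δ / 2 with hα
  obtain ⟨C0, C1, hC0, hC1, hest⟩ := prox_est hNF ho (α := α) (by linarith) (by linarith) c k
  obtain ⟨C, hC, hav⟩ := avg_abs_log hfm
  set g : ℝ → ℝ := fun x => Real.log (max 1 (T (max x 1))) with hg
  have hgm : Monotone g := by
    intro x y hxy
    refine Real.log_le_log (by positivity) (max_le_max le_rfl (hmono ?_ ?_ (max_le_max hxy le_rfl)))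
    · exact Set.mem_Ioi.2 (lt_of_lt_of_le (one_pos : (0:ℝ) < 1) (le_max_right _ _))
    · exact Set.mem_Ioi.2 (lt_of_lt_of_le (one_pos : (0:ℝ) < 1) (le_max_right _ _))
  have hg0 : ∀ x, 0 ≤ g x := fun x => Real.log_nonneg (le_max_left _ _)
  have hgσ : ∀ᶠ r in atTop, g r ≤ r ^ σ := by
    filter_upwards [hgr, hT.eventually_ge_atTop 1, eventually_ge_atTop 1] with r h1 h2 h3
    simp only [hg]
    rw [max_eq_left h3, max_eq_right h2]
    exact h1
  obtain ⟨E, hE1, hE2, hE3⟩ := growth hgm hg0 hσ0 hδ0.le (by rw [hδ]; linarith) hgσ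
  refine ⟨E, hE1, hE2, ?_⟩
  set K := ‖c‖ + 1 with hK
  have hK0 : 1 ≤ K := by have := norm_nonneg c; linarith
  have hsr : Tendsto (fun r : ℝ => r ^ δ) atTop atTop := tendsto_rpow_atTop hδ0
  have hbig : ∀ᶠ r in atTop ⊓ 𝓟 Eᶜ, Real.circleAverage (fun z => Real.posLog ‖iteratedDeriv k f (z + c) / f z‖) 0 r
      / T r ≤ C0 / T r + 84 * K * r ^ (-δ) + 42 * C1 * r ^ (-(δ/2)) := by
    have hev : ∀ᶠ r : ℝ in atTop, 6 * K ≤ r ^ δ ∧ 1 ≤ r ∧ 1 ≤ T r ∧ C ≤ T r :=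
      (hsr.eventually_ge_atTop _).and ((eventually_ge_atTop 1).and
        ((hT.eventually_ge_atTop _).and (hT.eventually_ge_atTop _)))
    filter_upwards [hE3, hev.filter_mono inf_le_left] with r h1 ⟨h2, h3, h4, h5⟩
    set s := r ^ δ with hs
    have hr0 : 0 < r := by linarith
    have hs0 : 0 < s := by positivity
    have hsr : s ≤ r := by
      calc s ≤ r ^ (1:ℝ) := Real.rpow_le_rpow_of_exponent_le h3 (by linarith)
        _ = r := Real.rpow_one r
    have hTs : T (r + s) ≤ 3 * T r := by
      have h6 : T r ≤ T (r + s) := hmono hr0 (by simp; linarith) (by linarith)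
      simp only [hg] at h1
      rw [max_eq_left h3, max_eq_left (by linarith : 1 ≤ r + s), max_eq_right h4,
        max_eq_right (by linarith)] at h1
      have h7 := Real.exp_le_exp.2 h1
      rw [Real.exp_add, Real.exp_log (by linarith), Real.exp_log (by linarith)] at h7
      have := Real.exp_one_lt_d9
      nlinarith
    obtain ⟨R, ⟨hR1, hR2⟩, hR⟩ := exists_good_radius hfm ho (a := r + s / 3) (b := r + 2 * s / 3) (by linarith)
    obtain ⟨A, hA, hp⟩ := hest r R hr0 (by linarith) hR
    have hTR : T R ≤ T (r + s) := hmono (by simp; linarith) (by simp; linarith) (by linarith)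
    have ha1 := (hav R (by linarith)).1
    have ha2 := (hav (r + s) (by linarith)).2
    have hcb := count_bound hfm A (R := R) (R' := r + s) (by linarith) (by linarith)
      (fun a ha => ((hA a).1 ha).1)
    set Sg := ∑ a ∈ A, |((meromorphicOrderAt f a).untop₀ : ℝ)| with hSg
    have hSg0 : 0 ≤ Sg := Finset.sum_nonneg fun _ _ => abs_nonneg _
    have hlog : s / (6 * r) ≤ Real.log ((r + s) / R) := by
      have h8 := Real.one_sub_inv_le_log_of_pos (x := (r + s) / R) (div_pos (by linarith) (by linarith))
      refine le_trans ?_ h8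
      rw [inv_div, one_sub_div (by linarith), div_le_div_iff₀ (by linarith) (by linarith)]
      nlinarith
    have hS : Sg ≤ 42 * (r / s) * T r := by
      have h9 : Sg * (s / (6 * r)) ≤ 7 * T r := by
        have := mul_le_mul_of_nonneg_left hlog hSg0
        linarith
      have h10 : Sg = Sg * (s / (6 * r)) * (6 * (r / s)) := by field_simp
      rw [h10]
      calc _ ≤ 7 * T r * (6 * (r / s)) := by gcongr
        _ = _ := by ring
    have hm : 4 * K / (R - r) * Real.circleAverage (fun ζ => |Real.log ‖f ζ‖|) 0 R
        ≤ 12 * K / s * (7 * T r) := by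
      have h11 : 4 * K / (R - r) ≤ 12 * K / s := by
        rw [div_le_div_iff₀ (by linarith) hs0]; nlinarith
      calc _ ≤ 4 * K / (R - r) * (7 * T r) := by
            refine mul_le_mul_of_nonneg_left (by linarith) ?_
            exact div_nonneg (by linarith) (by linarith)
        _ ≤ _ := by
            refine mul_le_mul_of_nonneg_right h11 (by linarith)
    have hn : C1 * r ^ (-α) * Sg ≤ C1 * r ^ (-α) * (42 * (r / s) * T r) :=
      mul_le_mul_of_nonneg_left hS (by positivity)
    have hT0 : 0 < T r := by linarith
    rw [div_le_iff₀ hT0]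
    have e1 : r ^ (-δ) = s⁻¹ := Real.rpow_neg hr0.le _
    have e2 : r ^ (-α) * (r / s) = r ^ (-(δ/2)) := by
      have : r / s = r ^ (1 - δ) := by rw [Real.rpow_sub hr0, Real.rpow_one]
      rw [this, ← Real.rpow_add hr0]
      congr 1; rw [hα]; ring
    have e3 : (C0 / T r + 84 * K * r ^ (-δ) + 42 * C1 * r ^ (-(δ/2))) * T r =
        C0 + 12 * K / s * (7 * T r) + C1 * r ^ (-α) * (42 * (r / s) * T r) := by
      rw [← e2, e1]; field_simp; ring
    rw [e3]
    linarith
  have hlim : Tendsto (fun r => C0 / T r + 84 * K * r ^ (-δ) + 42 * C1 * r ^ (-(δ/2)))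
      (atTop ⊓ 𝓟 Eᶜ) (nhds 0) := by
    refine Tendsto.mono_left ?_ inf_le_left
    have l1 : Tendsto (fun r => C0 / T r) atTop (nhds 0) := hT.const_div_atTop C0
    have l2 := (tendsto_rpow_neg_atTop hδ0).const_mul (84 * K)
    have l3 := (tendsto_rpow_neg_atTop (half_pos hδ0)).const_mul (42 * C1)
    simpa using (l1.add l2).add l3
  refine tendsto_of_tendsto_of_tendsto_of_le_of_le' tendsto_const_nhds hlim ?_ hbig
  have hev : ∀ᶠ r : ℝ in atTop, 1 ≤ T r := hT.eventually_ge_atTop _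
  filter_upwards [hev.filter_mono inf_le_left] with r hr
  refine div_nonneg ?_ (by linarith)
  exact Real.circleAverage_nonneg_of_nonneg (fun x _ => Real.posLog_nonneg)

end H1

section F1

open MeasureTheory Filter Metric
open Nevanlinna

lemma prox_eq (f : ℂ → ℂ) (r : ℝ) : prox f r = Real.circleAverage (fun z => Real.posLog ‖f z‖) 0 r := by
  simp only [prox, Real.circleAverage, smul_eq_mul, circleMap, zero_add, logp, Real.posLog, max_comm]

lemma poleOrd_eq {f : ℂ → ℂ} (hf : Meromorphic f) (z : ℂ) :
    (poleOrd f z : ℤ) = ((MeromorphicOn.divisor f Set.univ)⁻) z := by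
  rw [Function.locallyFinsuppWithin.negPart_apply, MeromorphicOn.divisor_apply hf.meromorphicOn (Set.mem_univ z)]
  have hset : {n : ℕ | AnalyticAt ℂ (fun w => (w - z) ^ (n + 1) * f w) z} =
      {n : ℕ | ((meromorphicOrderAt f z).untop₀)⁻ ≤ n} := by
    ext n
    simp only [Set.mem_ofPred_eq]
    have hp : MeromorphicAt (fun w : ℂ => (w - z) ^ (n + 1)) z := by fun_prop
    have hpo : meromorphicOrderAt (fun w : ℂ => (w - z) ^ (n + 1)) z = ((n + 1 : ℤ) : WithTop ℤ) := by
      rw [meromorphicOrderAt_eq_int_iff hp]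
      exact ⟨fun _ => 1, analyticAt_const, one_ne_zero, Eventually.of_forall fun w => by
        simp only [smul_eq_mul, mul_one]
        rw [← zpow_natCast]; push_cast; rfl⟩
    have hmul : meromorphicOrderAt (fun w : ℂ => (w - z) ^ (n + 1) * f w) z =
        ((n + 1 : ℤ) : WithTop ℤ) + meromorphicOrderAt f z := by
      rw [← hpo]; exact meromorphicOrderAt_mul hp (hf z)
    have hval : (fun w : ℂ => (w - z) ^ (n + 1) * f w) z = 0 := by simp
    have hiff : AnalyticAt ℂ (fun w => (w - z) ^ (n + 1) * f w) z ↔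
        0 < meromorphicOrderAt (fun w : ℂ => (w - z) ^ (n + 1) * f w) z := by
      constructor
      · intro h
        refine lt_of_le_of_ne h.meromorphicOrderAt_nonneg ?_
        intro h0
        exact (h.meromorphicNFAt.meromorphicOrderAt_eq_zero_iff.1 h0.symm) hval
      · intro h
        have ht := tendsto_zero_of_meromorphicOrderAt_pos h
        have hm : MeromorphicAt (fun w : ℂ => (w - z) ^ (n + 1) * f w) z := hp.mul (hf z)
        refine hm.analyticAt ?_
        rw [continuousAt_iff_punctured_nhds]
        simpa using ht
    rw [hiff, hmul]
    induction h : meromorphicOrderAt f z with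
    | top => simp
    | coe m =>
      rw [← WithTop.coe_add, WithTop.untop₀_coe, ← WithTop.coe_zero, WithTop.coe_lt_coe, negPart_def]
      simp only [sup_le_iff]
      constructor
      · intro h; constructor <;> omega
      · intro h; omega
  unfold poleOrd
  rw [hset]
  obtain ⟨m, hm⟩ := Int.eq_ofNat_of_zero_le (negPart_nonneg (meromorphicOrderAt f z).untop₀)
  rw [hm]
  have : {n : ℕ | (m : ℤ) ≤ n} = Set.Ici m := by ext; simp
  rw [this, csInf_Ici]

lemma int_ind {ρ r : ℝ} (h0 : 0 < ρ) (h1 : ρ ≤ r) :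
    IntervalIntegrable (fun t => if ρ ≤ t then t⁻¹ else 0) volume 0 r ∧
    ∫ t in (0:ℝ)..r, (if ρ ≤ t then t⁻¹ else 0) = Real.log (r * ρ⁻¹) := by
  have e : (fun t : ℝ => if ρ ≤ t then t⁻¹ else 0) = (Set.Ici ρ).indicator (fun t => t⁻¹) := by
    ext t; simp [Set.indicator]
  have hI : IntervalIntegrable (fun t : ℝ => t⁻¹) volume ρ r := by
    refine intervalIntegral.intervalIntegrable_inv (fun x hx => ?_) continuousOn_id
    rw [Set.uIcc_of_le h1] at hx
    linarith [hx.1]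
  have hset : Set.Ici ρ ∩ Set.Ioc 0 r = Set.Icc ρ r := by
    ext t; simp only [Set.mem_inter_iff, Set.mem_Ici, Set.mem_Ioc, Set.mem_Icc]
    constructor
    · rintro ⟨a, b, c⟩; exact ⟨a, c⟩
    · rintro ⟨a, b⟩; exact ⟨a, by linarith, b⟩
  rw [e]
  constructor
  · rw [intervalIntegrable_iff_integrableOn_Ioc_of_le (by linarith), IntegrableOn,
      integrable_indicator_iff measurableSet_Ici, IntegrableOn, Measure.restrict_restrict measurableSet_Ici, hset]
    rwa [intervalIntegrable_iff_integrableOn_Icc_of_le h1] at hI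
  · rw [intervalIntegral.integral_of_le (by linarith), integral_indicator measurableSet_Ici,
      Measure.restrict_restrict measurableSet_Ici, hset, integral_Icc_eq_integral_Ioc,
      ← intervalIntegral.integral_of_le h1, integral_inv_of_pos h0 (by linarith), div_eq_mul_inv]

lemma N_eq {f : ℂ → ℂ} (hf : Meromorphic f) {r : ℝ} (hr : 0 < r) :
    N f r = ValueDistribution.logCounting f ⊤ r := by
  classical
  rw [ValueDistribution.logCounting_top]
  set D := (MeromorphicOn.divisor f Set.univ)⁻ with hD
  have hpo : ∀ z, (poleOrd f z : ℝ) = (D z : ℝ) := fun z => by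
    rw [← poleOrd_eq hf z]; simp
  have hfin : (closedBall (0:ℂ) r ∩ D.support).Finite :=
    (Function.locallyFinsupp.locallyFiniteSupport D).finite_inter_support_of_isCompact (isCompact_closedBall 0 r)
  set S := hfin.toFinset with hS
  have hSm : ∀ z, z ∈ S ↔ ‖z‖ ≤ r ∧ D z ≠ 0 := fun z => by simp [hS]
  have hpc : ∀ t, t ≤ r → poleCount f t = ∑ a ∈ S, if ‖a‖ ≤ t then (D a : ℝ) else 0 := by
    intro t ht
    unfold poleCount
    simp_rw [hpo, finsum_mem_def]
    rw [finsum_eq_sum_of_support_subset (s := S)]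
    · refine Finset.sum_congr rfl fun a _ => ?_
      simp [Set.indicator]
    · intro z hz
      simp only [Function.mem_support, Set.indicator, mem_closedBall_zero_iff] at hz
      rw [Finset.mem_coe, hSm]
      split_ifs at hz with h
      · exact ⟨h.trans ht, by exact_mod_cast hz⟩
      · simp at hz
  have hpc0 : poleCount f 0 = D 0 := by
    rw [hpc 0 hr.le]
    simp only [norm_le_zero_iff, Finset.sum_ite_eq']
    split_ifs with h
    · rfl
    · rw [hSm] at h
      have : D 0 = 0 := by by_contra h'; exact h ⟨by simpa using hr.le, h'⟩
      simp [this]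
  have hdiff : ∀ t ∈ Set.Ioc 0 r, (poleCount f t - poleCount f 0) / t =
      ∑ a ∈ S.erase 0, (D a : ℝ) * (if ‖a‖ ≤ t then t⁻¹ else 0) := by
    intro t ht
    have : poleCount f t = D 0 + ∑ a ∈ S.erase 0, if ‖a‖ ≤ t then (D a : ℝ) else 0 := by
      rw [hpc t ht.2]
      by_cases h : (0:ℂ) ∈ S
      · rw [← Finset.add_sum_erase _ _ h]; simp [ht.1.le]
      · rw [Finset.erase_eq_of_notMem h]
        have : D 0 = 0 := by by_contra h'; exact h ((hSm 0).2 ⟨by simpa using hr.le, h'⟩)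
        simp [this]
    rw [this, hpc0, add_sub_cancel_left, Finset.sum_div]
    refine Finset.sum_congr rfl fun a _ => ?_
    split_ifs <;> simp [div_eq_mul_inv]
  have hρ : ∀ a ∈ S.erase 0, 0 < ‖a‖ ∧ ‖a‖ ≤ r := fun a ha => by
    rw [Finset.mem_erase, hSm] at ha
    exact ⟨norm_pos_iff.2 ha.1, ha.2.1⟩
  have hint : ∫ t in (0:ℝ)..r, (poleCount f t - poleCount f 0) / t =
      ∑ a ∈ S.erase 0, (D a : ℝ) * Real.log (r * ‖a‖⁻¹) := by
    rw [intervalIntegral.integral_congr_Ioo_of_le hr.le fun t ht => hdiff t ⟨ht.1, ht.2.le⟩]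
    rw [intervalIntegral.integral_finsetSum]
    · refine Finset.sum_congr rfl fun a ha => ?_
      rw [intervalIntegral.integral_const_mul, (int_ind (hρ a ha).1 (hρ a ha).2).2]
    · intro a ha
      exact (int_ind (hρ a ha).1 (hρ a ha).2).1.const_mul _
  unfold N
  rw [hint, hpc0]
  simp only [Function.locallyFinsuppWithin.logCounting, AddMonoidHom.coe_mk, ZeroHom.coe_mk]
  congr 1
  rw [finsum_eq_sum_of_support_subset (s := S.erase 0)]
  · refine Finset.sum_congr rfl fun a ha => ?_
    rw [Function.locallyFinsuppWithin.toClosedBall_eval_within]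
    rw [abs_of_pos hr]; simpa using (hρ a ha).2
  · intro z hz
    rw [Function.mem_support] at hz
    have hz0 : z ≠ 0 := by rintro rfl; simp at hz
    have hzr : z ∈ closedBall (0:ℂ) |r| := by
      by_contra h
      rw [Function.locallyFinsuppWithin.apply_eq_zero_of_notMem _ h] at hz
      simp at hz
    rw [Function.locallyFinsuppWithin.toClosedBall_eval_within _ hzr] at hz
    rw [abs_of_pos hr] at hzr
    rw [Finset.mem_coe, Finset.mem_erase, hSm]
    exact ⟨hz0, by simpa using hzr, fun h => hz (by rw [h]; simp)⟩

lemma T_eq {f : ℂ → ℂ} (hf : Meromorphic f) {r : ℝ} (hr : 0 < r) :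
    T f r = ValueDistribution.characteristic f ⊤ r := by
  unfold T
  rw [prox_eq, N_eq hf hr]
  simp [ValueDistribution.characteristic, ValueDistribution.proximity_top]

end F1

section G1

open MeasureTheory Filter Metric
open Nevanlinna

lemma codisc_shift {P : ℂ → Prop} (h : ∀ᶠ z in codiscrete ℂ, P z) (c : ℂ) :
    ∀ᶠ z in codiscrete ℂ, P (z + c) := by
  have h' : {z | P z} ∈ codiscrete ℂ := h
  change {z | P (z + c)} ∈ codiscrete ℂ
  rw [mem_codiscrete] at h' ⊢
  intro x
  have h1 := h' (x + c)
  rw [disjoint_principal_right, compl_compl] at h1 ⊢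
  have ht : Tendsto (fun z : ℂ => z + c) (nhdsWithin x {x}ᶜ) (nhdsWithin (x + c) {x + c}ᶜ) := by
    refine tendsto_nhdsWithin_of_tendsto_nhds_of_eventually_within _ ?_ ?_
    · exact ((continuous_id.add continuous_const).tendsto x).mono_left nhdsWithin_le_nhds
    · filter_upwards [self_mem_nhdsWithin] with z hz
      simpa using hz
  exact ht h1

lemma codisc_iteratedDeriv {f g : ℂ → ℂ} (h : f =ᶠ[codiscrete ℂ] g) (k : ℕ) :
    iteratedDeriv k f =ᶠ[codiscrete ℂ] iteratedDeriv k g := by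
  have h' : {z | f z = g z} ∈ codiscrete ℂ := h
  have ho := (mem_codiscrete'.1 h').1
  filter_upwards [h'] with z hz
  have : f =ᶠ[nhds z] g := ho.mem_nhds hz
  exact this.iteratedDeriv_eq k

lemma prox_quot_congr {f g : ℂ → ℂ} (h : f =ᶠ[codiscrete ℂ] g) (k : ℕ) (c : ℂ) {r : ℝ} (hr : r ≠ 0) :
    prox (fun z => iteratedDeriv k f (z + c) / f z) r =
      prox (fun z => iteratedDeriv k g (z + c) / g z) r := by
  have h1 := codisc_shift (codisc_iteratedDeriv h k) c
  have h2 : (fun z => iteratedDeriv k f (z + c) / f z) =ᶠ[codiscrete ℂ]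
      (fun z => iteratedDeriv k g (z + c) / g z) := by
    filter_upwards [h, h1] with z hz hz'
    rw [hz, hz']
  have h3 := ValueDistribution.proximity_congr_codiscrete (a := ⊤) h2 hr
  rw [ValueDistribution.proximity_top, ValueDistribution.proximity_top] at h3
  rw [prox_eq, prox_eq]
  exact h3

lemma hyper_growth {f : ℂ → ℂ} (hρ : HyperOrderLtOne f) :
    ∃ σ : ℝ, 0 ≤ σ ∧ σ < 1 ∧ ∀ᶠ r in atTop, Real.log (T f r) ≤ r ^ σ := by
  unfold HyperOrderLtOne at hρ
  obtain ⟨b, hb1, hb2⟩ := EReal.lt_iff_exists_real_btwn.1 hρ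
  have hb : b < 1 := by exact_mod_cast hb2
  refine ⟨max b 0, le_max_right _ _, max_lt hb one_pos, ?_⟩
  filter_upwards [eventually_lt_of_limsup_lt hb1, eventually_gt_atTop 1] with r h1 h2
  have h3 : Real.log (Real.log (T f r)) / Real.log r < b := by exact_mod_cast h1
  have hlr := Real.log_pos h2
  rcases le_or_gt (Real.log (T f r)) 0 with h | h
  · exact h.trans (by positivity)
  · rw [div_lt_iff₀ hlr] at h3
    rw [Real.rpow_def_of_pos (by linarith), ← Real.log_le_iff_le_exp h]
    have := mul_le_mul_of_nonneg_right (le_max_left b 0) hlr.le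
    linarith

theorem main5
    (f : ℂ → ℂ) (hf : ∀ z, MeromorphicAt f z) 
    (hρ : HyperOrderLtOne f)
    (c : ℂ) 
    (k : ℕ) (hk : 1 ≤ k) :
    SmallQtyLog (fun r => prox (fun z => iteratedDeriv k f (z + c) / f z) r) f := by
  have hfm : Meromorphic f := hf
  by_cases hconst : ∃ a : ℂ, f =ᶠ[codiscrete ℂ] fun _ => a
  · obtain ⟨a, ha⟩ := hconst
    refine ⟨∅, Set.empty_subset _, by simp, ?_⟩
    have hev : ∀ᶠ r : ℝ in atTop, (0:ℝ) = prox (fun z => iteratedDeriv k f (z + c) / f z) r / T f r := by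
      filter_upwards [eventually_gt_atTop 0] with r hr
      rw [prox_quot_congr ha k c hr.ne', prox_eq]
      have : ∀ z, iteratedDeriv k (fun _ : ℂ => a) z = 0 := fun z => by
        rw [iteratedDeriv_const]; simp; omega
      simp [this, Real.circleAverage]
    exact (tendsto_const_nhds.congr' hev).mono_left inf_le_left
  set g := toMeromorphicNFOn f Set.univ with hg
  have hNF : MeromorphicNFOn g Set.univ := meromorphicNFOn_toMeromorphicNFOn f Set.univ
  have hgm : Meromorphic g := fun z => (hNF (Set.mem_univ z)).meromorphicAt
  have hfg : f =ᶠ[codiscrete ℂ] g := toMeromorphicNFOn_eqOn_codiscrete hfm.meromorphicOn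
  have hgc : ∀ (a z0 : ℂ), meromorphicOrderAt (fun z => g z - a) z0 ≠ ⊤ := by
    intro a z0 htop
    apply hconst
    refine ⟨a, hfg.trans ?_⟩
    have hm : MeromorphicOn (fun z => g z - a) Set.univ :=
      fun z _ => (hgm z).sub (MeromorphicAt.const a z)
    have hall : ∀ z, meromorphicOrderAt (fun z => g z - a) z = ⊤ := by
      intro z
      by_contra hne
      exact (hm.exists_meromorphicOrderAt_ne_top_iff_forall_mem isConnected_univ).1
        ⟨z, Set.mem_univ z, hne⟩ z0 (Set.mem_univ z0) htop
    change {z | g z = a} ∈ codiscrete ℂ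
    rw [mem_codiscrete]
    intro x
    rw [disjoint_principal_right, compl_compl]
    have := meromorphicOrderAt_eq_top_iff.1 (hall x)
    filter_upwards [this] with z hz
    exact sub_eq_zero.1 hz
  have ho : ∀ z, meromorphicOrderAt g z ≠ ⊤ := fun z => by simpa using hgc 0 z
  obtain ⟨R, hR, hRo⟩ := exists_good_radius hgm ho (a := 0) (b := 1) one_pos
  have hz0 : meromorphicOrderAt g (R : ℂ) = 0 := hRo _ (by simp [abs_of_pos hR.1])
  have hT := char_tendsto hgm (nf_order_zero hNF hz0).1 (hgc _ _)
  have hTfg : ∀ r, 0 < r → T f r = ValueDistribution.characteristic g ⊤ r := fun r hr => by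
    rw [T_eq hfm hr, ValueDistribution.characteristic_congr_codiscrete hfg hr.ne']
  obtain ⟨σ, h0, h1, hσ⟩ := hyper_growth hρ
  obtain ⟨E, hE1, hE2, hE3⟩ := main_nf hNF ho c k h0 h1 hT (by
    filter_upwards [hσ, eventually_gt_atTop 0] with r hr hr0
    rwa [← hTfg r hr0])
  refine ⟨E, hE1, hE2, hE3.congr' ?_⟩
  have hev : ∀ᶠ r : ℝ in atTop, 0 < r := eventually_gt_atTop 0
  filter_upwards [hev.filter_mono inf_le_left] with r hr
  rw [hTfg r hr, prox_quot_congr hfg k c hr.ne', prox_eq]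

end G1

/-- **Key estimate.**  For a non-constant meromorphic function `f` with
`ρ₁(f) < 1` and `c ≠ 0`, one has `m(r, f^{(k)}(z+c)/f(z)) = S(r,f)` outside a
possible exceptional set of finite logarithmic measure. -/
theorem statement5
    (f : ℂ → ℂ) (hf : ∀ z, MeromorphicAt f z) (hfnc : Nonconst f)
    (hρ : HyperOrderLtOne f)
    (c : ℂ) (hc : c ≠ 0)
    (k : ℕ) (hk : 1 ≤ k) :
    SmallQtyLog (fun r => prox (fun z => iteratedDeriv k f (z + c) / f z) r) f := by
  exact main5 f hf hρ c k hk
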